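/- arXiv:1205.2779 — 7 statements merged into one kernel-verified Lean document; each statement's English description precedes it below -/
import Mathlib

section
/- For every n ≥ 3, the derivation algebra of the naturally graded filiform Leibniz algebra NGF₁ has dimension n + 1, i.e. dim Der(NGF₁) = n + 1. -/
open scoped BigOperators

/-- The bilinear multiplication on `Fin n → ℂ` determined by structure constants
`c i j k` = coefficient of the basis vector `e k` in the product `[e i, e j]`
of basis vectors (all indices zero-based). -/
noncomputable def structMul (n : ℕ) (c : Fin n → Fin n → Fin n → ℂ) :
    (Fin n → ℂ) →ₗ[ℂ] (Fin n → ℂ) →ₗ[ℂ] (Fin n → ℂ) :=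
  LinearMap.mk₂ ℂ (fun x y k => ∑ i, ∑ j, x i * y j * c i j k)
    (by
      intro x x' y; funext k
      simp [add_mul, Finset.sum_add_distrib])
    (by
      intro a x y; funext k
      simp [Finset.mul_sum, mul_assoc])
    (by
      intro x y y'; funext k
      simp [mul_add, add_mul, Finset.sum_add_distrib])
    (by
      intro a x y; funext k
      simp only [Pi.smul_apply, smul_eq_mul, Finset.mul_sum]
      congr 1; funext i; congr 1; funext j; ring)

/-- The space of derivations of the algebra `(Fin n → ℂ, μ)`:
linear endomorphisms `d` with `d [x,y] = [d x, y] + [x, d y]`. -/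
noncomputable def derivations (n : ℕ)
    (μ : (Fin n → ℂ) →ₗ[ℂ] (Fin n → ℂ) →ₗ[ℂ] (Fin n → ℂ)) :
    Submodule ℂ (Module.End ℂ (Fin n → ℂ)) where
  carrier := {d | ∀ x y, d (μ x y) = μ (d x) y + μ x (d y)}
  add_mem' := by
    intro a b ha hb x y
    simp only [LinearMap.add_apply, ha x y, hb x y, map_add]
    abel
  zero_mem' := by intro x y; simp
  smul_mem' := by
    intro t a ha x y
    simp only [LinearMap.smul_apply, ha x y, map_smul, smul_add]

/-- Structure constants of `NGF₁`: `[e₁,e₁] = e₃`, `[eᵢ,e₁] = e_{i+1}` for `2 ≤ i ≤ n-1`. -/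
noncomputable def cNGF1 (n : ℕ) : Fin n → Fin n → Fin n → ℂ := fun i j k =>
  if j.val = 0 ∧ i.val = 0 ∧ k.val = 2 then 1
  else if j.val = 0 ∧ 1 ≤ i.val ∧ i.val ≤ n - 2 ∧ k.val = i.val + 1 then 1
  else 0

/-- Right multiplication by the first basis vector in `NGF₁`. -/
noncomputable def Rop (m : ℕ) : Module.End ℂ (Fin (m+3) → ℂ) where
  toFun x k := (if k.val = 2 then x 0 else 0) +
    (if 2 ≤ k.val then x ⟨k.val - 1, by omega⟩ else 0)
  map_add' x y := by
    funext k; simp only [Pi.add_apply]; split_ifs <;> ring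
  map_smul' a x := by
    funext k; simp only [Pi.smul_apply, smul_eq_mul, RingHom.id_apply]; split_ifs <;> ring

lemma Rop_apply (m : ℕ) (x : Fin (m+3) → ℂ) (k : Fin (m+3)) :
    Rop m x k = (if k.val = 2 then x 0 else 0) +
    (if 2 ≤ k.val then x ⟨k.val - 1, by omega⟩ else 0) := rfl

lemma structMul_eq (m : ℕ) (x y : Fin (m+3) → ℂ) :
    structMul (m+3) (cNGF1 (m+3)) x y = y 0 • Rop m x := by
  funext k
  simp only [structMul, LinearMap.mk₂_apply, Pi.smul_apply, smul_eq_mul, Rop_apply]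
  have h1 : ∀ i : Fin (m+3), ∑ j, x i * y j * cNGF1 (m+3) i j k
      = x i * y 0 * cNGF1 (m+3) i 0 k := by
    intro i
    apply Finset.sum_eq_single
    · intro j _ hj
      have : j.val ≠ 0 := fun h => hj (Fin.ext h)
      simp [cNGF1, this]
    · simp
  have h2 : ∀ i : Fin (m+3), x i * y 0 * cNGF1 (m+3) i 0 k
      = (if i = 0 then (if k.val = 2 then y 0 * x 0 else 0) else 0) +
        (if i = ⟨k.val - 1, by omega⟩ then (if 2 ≤ k.val then y 0 * x i else 0) else 0) := by
    intro i
    have hk := k.isLt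
    have hi := i.isLt
    by_cases h0 : i = 0
    · subst h0
      by_cases h2 : k.val = 2
      · simp [cNGF1, h2, Fin.ext_iff]; ring
      · have : ¬ (2 ≤ k.val ∧ 0 = k.val - 1) := by omega
        simp [cNGF1, h2, Fin.ext_iff]; intros; omega
    · have h0' : i.val ≠ 0 := fun h => h0 (Fin.ext h)
      by_cases h3 : i.val = k.val - 1 ∧ 2 ≤ k.val
      · have e : k.val = i.val + 1 := by omega
        have a1 : 1 ≤ i.val := by omega
        have a2 : i.val ≤ m + 1 := by omega
        simp [cNGF1, h0, Fin.ext_iff, e, a1, a2]; ring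
      · have : ¬ (1 ≤ i.val ∧ i.val ≤ m + 3 - 2 ∧ k.val = i.val + 1) := by omega
        simp only [cNGF1, h0, h0', Fin.ext_iff]
        rw [if_neg (by simp), if_neg (by simpa using this)]
        simp
        intros; omega
  simp only [h1, h2, Finset.sum_add_distrib, Finset.sum_ite_eq', Finset.mem_univ, if_true]
  split_ifs <;> ring

lemma mem_der_of (m : ℕ) (d : Module.End ℂ (Fin (m+3) → ℂ)) (a : ℂ)
    (h0 : ∀ y, d y 0 = a * y 0) (h1 : ∀ x, d (Rop m x) = Rop m (d x) + a • Rop m x) :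
    d ∈ derivations (m+3) (structMul (m+3) (cNGF1 (m+3))) := by
  intro x y
  simp only [structMul_eq, map_smul, h0, h1]
  module

lemma Rop_zero (m : ℕ) (x : Fin (m+3) → ℂ) : Rop m x 0 = 0 := by
  simp [Rop_apply]

lemma Rop_single_zero (m : ℕ) : Rop m (Pi.single 0 1) = Pi.single 2 1 := by
  funext k
  have : (2 : Fin (m+3)).val = 2 := rfl
  simp only [Rop_apply, Pi.single_apply, Fin.ext_iff, this, Fin.val_zero]
  split_ifs <;> first | omega | contradiction | (simp; done) | simp_all

lemma Rop_single (m i : ℕ) (hi : 1 ≤ i) (hi' : i + 1 < m + 3) :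
    Rop m (Pi.single ⟨i, by omega⟩ 1) = Pi.single ⟨i + 1, hi'⟩ 1 := by
  funext k
  simp only [Rop_apply, Pi.single_apply, Fin.ext_iff, Fin.val_zero]
  split_ifs <;> first | omega | contradiction | (simp; done) | simp_all

lemma der_zero (m : ℕ) (d : Module.End ℂ (Fin (m+3) → ℂ))
    (hd : d ∈ derivations (m+3) (structMul (m+3) (cNGF1 (m+3))))
    (u : d (Pi.single 0 1) = 0) (v : d (Pi.single 1 1) (Fin.last _) = 0) : d = 0 := by
  have hd' : ∀ x y, d (structMul (m+3) (cNGF1 (m+3)) x y) =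
    structMul (m+3) (cNGF1 (m+3)) (d x) y + structMul (m+3) (cNGF1 (m+3)) x (d y) := hd
  simp only [structMul_eq, map_smul] at hd'
  have hR : ∀ x, d (Rop m x) = Rop m (d x) := by
    intro x
    simpa [u] using hd' x (Pi.single 0 1)
  have e20 := hR (Pi.single 0 1)
  rw [Rop_single_zero, u, map_zero] at e20
  have hv0 : d (Pi.single 1 1) 0 = 0 := by
    have := congrFun (hd' (Pi.single 0 1) (Pi.single 1 1)) 2
    rw [Rop_single_zero, e20, u] at this
    simpa using this.symm
  have e1 : d (Pi.single 1 1) = 0 := by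
    have h := hR (Pi.single 1 1)
    have h' : Rop m (Pi.single 1 1) = Pi.single 2 1 := Rop_single m 1 le_rfl (by omega)
    rw [h', e20] at h
    funext k
    by_cases hk0 : k.val = 0
    · rw [show k = 0 from Fin.ext hk0, hv0]; rfl
    by_cases hkl : k.val = m + 2
    · rw [show k = Fin.last _ from Fin.ext hkl, v]; rfl
    have hk := k.isLt
    have := congrFun h ⟨k.val + 1, by omega⟩
    rw [Rop_apply] at this
    simp only [hv0, ite_self, zero_add, Nat.add_sub_cancel] at this
    rw [if_pos (by omega)] at this
    exact this.symm
  have all : ∀ i (hi : i + 1 < m + 3), d (Pi.single ⟨i + 1, hi⟩ 1) = 0 := by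
    intro i
    induction i with
    | zero => intro hi; exact e1
    | succ i ih =>
      intro hi
      rw [← Rop_single m (i+1) (by omega) hi, hR, ih, map_zero]
  apply LinearMap.pi_ext'
  intro i
  ext1
  obtain ⟨i, hi⟩ := i
  cases i with
  | zero => exact u
  | succ i => exact all i hi

noncomputable def evDer (m : ℕ) : derivations (m+3) (structMul (m+3) (cNGF1 (m+3))) →ₗ[ℂ]
    (Fin (m+3) → ℂ) × ℂ where
  toFun d := (d.1 (Pi.single 0 1), d.1 (Pi.single 1 1) (Fin.last _))
  map_add' x y := rfl
  map_smul' a x := rfl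

/-- The diagonal derivation. -/
noncomputable def Dg (m : ℕ) : Module.End ℂ (Fin (m+3) → ℂ) where
  toFun x k := (if k.val = 0 then 1 else (k.val : ℂ)) * x k
  map_add' x y := by
    funext k; simp only [Pi.add_apply]; ring
  map_smul' a x := by
    funext k; simp only [Pi.smul_apply, smul_eq_mul, RingHom.id_apply]; ring

/-- The derivation with `e₁ ↦ e₂`, and `eᵢ ↦ eᵢ` for `i ≥ 2`. -/
noncomputable def Tg (m : ℕ) : Module.End ℂ (Fin (m+3) → ℂ) where
  toFun x k := if k.val = 0 then 0 else if k.val = 1 then x 0 + x 1 else x k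
  map_add' x y := by
    funext k; simp only [Pi.add_apply]; split_ifs <;> ring
  map_smul' a x := by
    funext k; simp only [Pi.smul_apply, smul_eq_mul, RingHom.id_apply]; split_ifs <;> ring

/-- The derivation with `e₂ ↦ eₙ`. -/
noncomputable def Eg (m : ℕ) : Module.End ℂ (Fin (m+3) → ℂ) where
  toFun x k := if k.val = m + 2 then x 1 else 0
  map_add' x y := by
    funext k; simp only [Pi.add_apply]; split_ifs <;> ring
  map_smul' a x := by
    funext k; simp only [Pi.smul_apply, smul_eq_mul, RingHom.id_apply]; split_ifs <;> ring

lemma Dg_mem (m : ℕ) : Dg m ∈ derivations (m+3) (structMul (m+3) (cNGF1 (m+3))) := by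
  apply mem_der_of m _ 1
  · intro y; simp [Dg]
  · intro x
    funext ⟨k, hk⟩
    rcases k with _ | _ | _ | k
    · simp [Dg, Rop_apply]
    · simp [Dg, Rop_apply]
    · simp [Dg, Rop_apply]; ring
    · simp [Dg, Rop_apply]; ring

lemma Tg_mem (m : ℕ) : Tg m ∈ derivations (m+3) (structMul (m+3) (cNGF1 (m+3))) := by
  apply mem_der_of m _ 0
  · intro y; simp [Tg]
  · intro x
    funext ⟨k, hk⟩
    rcases k with _ | _ | _ | k
    · simp [Tg, Rop_apply]
    · simp [Tg, Rop_apply]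
    · simp [Tg, Rop_apply]
    · simp [Tg, Rop_apply]

lemma Eg_mem (m : ℕ) : Eg m ∈ derivations (m+3) (structMul (m+3) (cNGF1 (m+3))) := by
  apply mem_der_of m _ 0
  · intro y; simp [Eg]
  · intro x
    funext ⟨k, hk⟩
    rcases k with _ | _ | _ | k
    · simp [Eg, Rop_apply]
    · simp [Eg, Rop_apply]
    · simp [Eg, Rop_apply]
    · have : k + 1 + 1 ≠ m + 2 := by omega
      simp [Eg, Rop_apply]; intros; omega

lemma Rpow_mem (m j : ℕ) :
    Rop m ^ (j+1) ∈ derivations (m+3) (structMul (m+3) (cNGF1 (m+3))) := by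
  apply mem_der_of m _ 0
  · intro y
    rw [pow_succ', Module.End.mul_apply, Rop_zero, zero_mul]
  · intro x
    rw [zero_smul, add_zero, ← Module.End.mul_apply, ← Module.End.mul_apply, ← pow_succ, ← pow_succ']

lemma Rpow_single (m j : ℕ) (hj : j + 2 < m + 3) :
    (Rop m ^ (j+1)) (Pi.single 0 1) = Pi.single ⟨j + 2, hj⟩ 1 := by
  induction j with
  | zero => rw [zero_add, pow_one]; exact Rop_single_zero m
  | succ j ih =>
    rw [pow_succ', Module.End.mul_apply, ih (by omega), Rop_single m (j+2) (by omega) hj]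

lemma evDer_surj (m : ℕ) : LinearMap.range (evDer m) = ⊤ := by
  have hE : ((0, 1) : (Fin (m+3) → ℂ) × ℂ) ∈ LinearMap.range (evDer m) := by
    refine ⟨⟨Eg m, Eg_mem m⟩, ?_⟩
    refine Prod.ext ?_ ?_
    · funext k; simp [evDer, Eg]
    · simp [evDer, Eg]
  have hc : ∀ (u : Fin (m+3) → ℂ), (∃ c : ℂ, (u, c) ∈ LinearMap.range (evDer m)) →
      (u, (0:ℂ)) ∈ LinearMap.range (evDer m) := by
    rintro u ⟨c, h⟩
    have := Submodule.sub_mem _ h (Submodule.smul_mem _ c hE)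
    simpa using this
  have hk : ∀ k : Fin (m+3), ((Pi.single k 1 : Fin (m+3) → ℂ), (0:ℂ)) ∈
      LinearMap.range (evDer m) := by
    rintro ⟨k, hk⟩
    apply hc
    rcases k with _ | _ | k
    · refine ⟨_, ⟨Dg m, Dg_mem m⟩, Prod.ext ?_ rfl⟩
      funext i
      simp only [evDer, Dg, LinearMap.coe_mk, AddHom.coe_mk, Pi.single_apply, Fin.ext_iff,
        Fin.val_zero]
      split_ifs <;> simp
    · refine ⟨_, ⟨Tg m, Tg_mem m⟩, Prod.ext ?_ rfl⟩
      funext i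
      simp only [evDer, Tg, LinearMap.coe_mk, AddHom.coe_mk, Pi.single_apply, Fin.ext_iff,
        Fin.val_zero, Fin.val_one]
      split_ifs <;> first | omega | contradiction | (simp; done) | simp_all
    · exact ⟨_, ⟨_, Rpow_mem m k⟩, Prod.ext (Rpow_single m k hk) rfl⟩
  rw [eq_top_iff]
  rintro ⟨u, b⟩ -
  have h : (u, b) = ∑ k, u k • ((Pi.single k 1 : Fin (m+3) → ℂ), (0:ℂ)) + b • (0, 1) := by
    refine Prod.ext ?_ ?_
    · funext i
      simp [Prod.fst_sum, Finset.sum_apply, Pi.single_apply]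
    · simp [Prod.snd_sum]
  rw [h]
  exact Submodule.add_mem _ (Submodule.sum_mem _ fun k _ => Submodule.smul_mem _ _ (hk k))
    (Submodule.smul_mem _ _ hE)

lemma evDer_inj (m : ℕ) : Function.Injective (evDer m) := by
  rw [injective_iff_map_eq_zero]
  intro d hd
  exact Subtype.ext (der_zero m d.1 d.2 (congrArg Prod.fst hd) (congrArg Prod.snd hd))

theorem dim_der_NGF1 (n : ℕ) (hn : 3 ≤ n) :
    Module.finrank ℂ (derivations n (structMul n (cNGF1 n))) = n + 1 := by
  obtain ⟨m, rfl⟩ : ∃ m, n = m + 3 := ⟨n - 3, by omega⟩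
  have e := LinearEquiv.ofBijective (evDer m)
    ⟨evDer_inj m, LinearMap.range_eq_top.1 (evDer_surj m)⟩
  rw [e.finrank_eq]
  simp
end

section
/- For every n ≥ 5 and every choice of parameters α₄, …, αₙ, θ ∈ ℂ, the algebra L = L(α₄,…,αₙ,θ) of the first class FLbₙ satisfies n − 1 ≤ dim Der(L) ≤ n + 1. -/
open scoped BigOperators

/-- Structure constants of `L(α₄,…,αₙ,θ) ∈ FLbₙ`:
`[e₁,e₁] = e₃`; `[eᵢ,e₁] = e_{i+1}` for `2 ≤ i ≤ n-1`;
`[e₁,e₂] = α₄e₄ + ⋯ + α_{n-1}e_{n-1} + θeₙ`;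
`[eⱼ,e₂] = α₄e_{j+2} + ⋯ + α_{n+2-j}eₙ` for `2 ≤ j ≤ n-2`. -/
noncomputable def cFLb (n : ℕ) (α : ℕ → ℂ) (θ : ℂ) : Fin n → Fin n → Fin n → ℂ :=
  fun i j k =>
  if j.val = 0 then
    (if i.val = 0 ∧ k.val = 2 then 1
     else if 1 ≤ i.val ∧ i.val ≤ n - 2 ∧ k.val = i.val + 1 then 1
     else 0)
  else if j.val = 1 then
    (if i.val = 0 then
       (if 3 ≤ k.val ∧ k.val ≤ n - 2 then α (k.val + 1)
        else if k.val = n - 1 then θ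
        else 0)
     else if 1 ≤ i.val ∧ i.val ≤ n - 3 ∧ i.val + 2 ≤ k.val then α (k.val - i.val + 2)
     else 0)
  else 0

namespace FLb

/-- zero-based basis vector (zero if out of range) -/
noncomputable def e (n : ℕ) (i : ℕ) : Fin n → ℂ := fun k => if k.val = i then 1 else 0

lemma single_eq (n : ℕ) (i : Fin n) : Pi.single i (1 : ℂ) = e n i.val := by
  funext k
  simp [e, Pi.single_apply, Fin.ext_iff]

lemma mul_e (n : ℕ) (c : Fin n → Fin n → Fin n → ℂ) (i j k : Fin n) :
    structMul n c (e n i.val) (e n j.val) k = c i j k := by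
  simp [structMul, LinearMap.mk₂_apply, e, ← Fin.ext_iff]

lemma end_ext (n : ℕ) {f g : Module.End ℂ (Fin n → ℂ)}
    (h : ∀ i : Fin n, f (e n i.val) = g (e n i.val)) : f = g := by
  apply (Pi.basisFun ℂ (Fin n)).ext
  intro i
  rw [Pi.basisFun_apply, single_eq, h]

/-- right multiplication by the first basis vector -/
noncomputable def S (n : ℕ) (hn : 5 ≤ n) : Module.End ℂ (Fin n → ℂ) where
  toFun x := fun k => if k.val = 2 then x ⟨0, by omega⟩ + x ⟨1, by omega⟩
    else if 3 ≤ k.val then x ⟨k.val - 1, by omega⟩ else 0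
  map_add' x y := by
    funext k
    simp only [Pi.add_apply]
    split_ifs <;> ring
  map_smul' a x := by
    funext k
    simp only [Pi.smul_apply, smul_eq_mul, RingHom.id_apply]
    split_ifs <;> ring

lemma S_apply (n : ℕ) (hn : 5 ≤ n) (x : Fin n → ℂ) (k : Fin n) :
    S n hn x k = if k.val = 2 then x ⟨0, by omega⟩ + x ⟨1, by omega⟩
    else if 3 ≤ k.val then x ⟨k.val - 1, by omega⟩ else 0 := rfl

lemma S_e0 (n : ℕ) (hn : 5 ≤ n) : S n hn (e n 0) = e n 2 := by
  funext k
  rw [S_apply]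
  simp only [e]
  split_ifs <;> first | contradiction | omega | simp

lemma S_e (n : ℕ) (hn : 5 ≤ n) (i : ℕ) (hi : 1 ≤ i) : S n hn (e n i) = e n (i + 1) := by
  funext k
  rw [S_apply]
  simp only [e]
  split_ifs <;> first | contradiction | omega | simp

lemma mul_right0 (n : ℕ) (hn : 5 ≤ n) (α : ℕ → ℂ) (θ : ℂ) :
    (structMul n (cFLb n α θ)).flip (e n 0) = S n hn := by
  apply end_ext
  intro i
  funext k
  rw [LinearMap.flip_apply]
  have := mul_e n (cFLb n α θ) i ⟨0, by omega⟩ k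
  simp only at this
  rw [this, S_apply]
  have hk := k.2
  have hi := i.2
  simp only [e, cFLb]
  split_ifs <;> first | contradiction | omega | simp

lemma mul_right_ge (n : ℕ) (α : ℕ → ℂ) (θ : ℂ) (j : ℕ) (hj : 2 ≤ j) (hjn : j < n) :
    (structMul n (cFLb n α θ)).flip (e n j) = 0 := by
  apply end_ext
  intro i
  funext k
  rw [LinearMap.flip_apply]
  have := mul_e n (cFLb n α θ) i ⟨j, hjn⟩ k
  simp only at this
  rw [this]
  simp only [cFLb]
  rw [if_neg (by omega), if_neg (by omega)]
  rfl

/-- right multiplication by the second basis vector -/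
noncomputable def T (n : ℕ) (α : ℕ → ℂ) (θ : ℂ) : Module.End ℂ (Fin n → ℂ) :=
  (structMul n (cFLb n α θ)).flip (e n 1)

lemma T_e (n : ℕ) (hn : 5 ≤ n) (α : ℕ → ℂ) (θ : ℂ) (i k : Fin n) :
    T n α θ (e n i.val) k = cFLb n α θ i ⟨1, by omega⟩ k := by
  have := mul_e n (cFLb n α θ) i ⟨1, by omega⟩ k
  exact this

lemma decomp (n : ℕ) (x : Fin n → ℂ) : x = ∑ j : Fin n, x j • e n j.val := by
  conv_lhs => rw [pi_eq_sum_univ' x]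
  apply Finset.sum_congr rfl
  intro j _
  congr 1
  funext k
  rw [← single_eq]

lemma mul_right (n : ℕ) (hn : 5 ≤ n) (α : ℕ → ℂ) (θ : ℂ) (y : Fin n → ℂ) :
    (structMul n (cFLb n α θ)).flip y =
      y ⟨0, by omega⟩ • S n hn + y ⟨1, by omega⟩ • T n α θ := by
  conv_lhs => rw [decomp n y]
  rw [map_sum, Finset.sum_eq_add (⟨0, by omega⟩ : Fin n) ⟨1, by omega⟩ (by simp)]
  · rw [map_smul, map_smul, mul_right0 n hn, T]
  · intro j _ hj
    rw [map_smul, mul_right_ge n α θ j.val, smul_zero]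
    · have h0 : j.val ≠ 0 := fun h => hj.1 (Fin.ext h)
      have h1 : j.val ≠ 1 := fun h => hj.2 (Fin.ext h)
      omega
    · exact j.2
  · simp
  · simp

lemma mul_eq (n : ℕ) (hn : 5 ≤ n) (α : ℕ → ℂ) (θ : ℂ) (x y : Fin n → ℂ) :
    structMul n (cFLb n α θ) x y =
      y ⟨0, by omega⟩ • S n hn x + y ⟨1, by omega⟩ • T n α θ x := by
  have := congrArg (fun f => f x) (mul_right n hn α θ y)
  simpa using this

lemma S_T (n : ℕ) (hn : 5 ≤ n) (α : ℕ → ℂ) (θ : ℂ) :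
    S n hn * T n α θ = T n α θ * S n hn := by
  apply end_ext
  intro i
  funext k
  rw [Module.End.mul_apply, Module.End.mul_apply, S_apply]
  simp only [T_e n hn]
  have hk := k.2
  have hi := i.2
  rcases Nat.eq_zero_or_pos i.val with h0 | h0
  · rw [h0, S_e0]
    have := T_e n hn α θ ⟨2, by omega⟩ k
    simp only at this
    rw [this]
    simp only [cFLb]
    split_ifs <;> first | contradiction | omega | (congr 1; omega) | simp
  · rw [S_e n hn _ h0]
    by_cases hl : i.val + 1 < n
    · have := T_e n hn α θ ⟨i.val + 1, hl⟩ k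
      simp only at this
      rw [this]
      simp only [cFLb]
      split_ifs <;> first | contradiction | omega | (congr 1; omega) | simp
    · have hz : e n (i.val + 1) = 0 := by
        funext k
        have := k.2
        simp only [e]
        rw [if_neg (by omega)]
        rfl
      rw [hz, map_zero]
      simp only [cFLb]
      split_ifs <;> first | contradiction | omega | simp

/-- the extra derivation `e₁ ↦ eₙ` -/
noncomputable def E (n : ℕ) (hn : 5 ≤ n) : Module.End ℂ (Fin n → ℂ) :=
  (LinearMap.proj (⟨0, by omega⟩ : Fin n)).smulRight (e n (n - 1))

lemma E_apply (n : ℕ) (hn : 5 ≤ n) (x : Fin n → ℂ) :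
    E n hn x = x ⟨0, by omega⟩ • e n (n - 1) := rfl

lemma S_0 (n : ℕ) (hn : 5 ≤ n) (x : Fin n → ℂ) : S n hn x ⟨0, by omega⟩ = 0 := by
  rw [S_apply]; simp

lemma S_1 (n : ℕ) (hn : 5 ≤ n) (x : Fin n → ℂ) : S n hn x ⟨1, by omega⟩ = 0 := by
  rw [S_apply]; simp

lemma T_lt (n : ℕ) (hn : 5 ≤ n) (α : ℕ → ℂ) (θ : ℂ) (x : Fin n → ℂ) (k : Fin n)
    (hk : k.val ≤ 2) : T n α θ x k = 0 := by
  rw [decomp n x, map_sum, Finset.sum_apply]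
  apply Finset.sum_eq_zero
  intro i _
  rw [map_smul, Pi.smul_apply, T_e n hn]
  have hi := i.2
  simp only [cFLb]
  split_ifs <;> first | contradiction | omega | simp

lemma T_last (n : ℕ) (hn : 5 ≤ n) (α : ℕ → ℂ) (θ : ℂ) : T n α θ (e n (n - 1)) = 0 := by
  funext k
  have := T_e n hn α θ ⟨n - 1, by omega⟩ k
  simp only at this
  rw [this]
  simp only [cFLb]
  split_ifs <;> first | contradiction | omega | simp

lemma S_last (n : ℕ) (hn : 5 ≤ n) : S n hn (e n (n - 1)) = 0 := by
  rw [S_e n hn _ (by omega)]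
  funext k
  have := k.2
  simp only [e]
  rw [if_neg (by omega)]
  rfl

lemma mem_of (n : ℕ) (hn : 5 ≤ n) (α : ℕ → ℂ) (θ : ℂ) (d : Module.End ℂ (Fin n → ℂ))
    (h0 : ∀ x, d x ⟨0, by omega⟩ = 0) (h1 : ∀ x, d x ⟨1, by omega⟩ = 0)
    (hS : ∀ x, d (S n hn x) = S n hn (d x)) (hT : ∀ x, d (T n α θ x) = T n α θ (d x)) :
    d ∈ derivations n (structMul n (cFLb n α θ)) := by
  intro x y
  simp only [mul_eq n hn, h0, h1, map_add, map_smul, hS, hT]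
  simp

lemma E_mem (n : ℕ) (hn : 5 ≤ n) (α : ℕ → ℂ) (θ : ℂ) :
    E n hn ∈ derivations n (structMul n (cFLb n α θ)) := by
  apply mem_of n hn
  · intro x
    simp only [E_apply, Pi.smul_apply, e]
    rw [if_neg (by omega), smul_zero]
  · intro x
    simp only [E_apply, Pi.smul_apply, e]
    rw [if_neg (by omega), smul_zero]
  · intro x
    rw [E_apply, E_apply, S_0, map_smul, S_last, smul_zero, zero_smul]
  · intro x
    rw [E_apply, E_apply, T_lt n hn _ _ _ _ (by simp), map_smul, T_last n hn, smul_zero, zero_smul]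

lemma S_pow_mem (n : ℕ) (hn : 5 ≤ n) (α : ℕ → ℂ) (θ : ℂ) (m : ℕ) :
    S n hn ^ (m + 1) ∈ derivations n (structMul n (cFLb n α θ)) := by
  apply mem_of n hn
  · intro x
    rw [pow_succ', Module.End.mul_apply, S_0]
  · intro x
    rw [pow_succ', Module.End.mul_apply, S_1]
  · intro x
    rw [← Module.End.mul_apply, ← Module.End.mul_apply, ← pow_succ, ← pow_succ']
  · intro x
    rw [← Module.End.mul_apply, ← Module.End.mul_apply]
    have hc : Commute (S n hn) (T n α θ) := S_T n hn α θ
    rw [(hc.pow_left (m + 1)).eq]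

lemma S_pow_e1 (n : ℕ) (hn : 5 ≤ n) (m : ℕ) : (S n hn ^ m) (e n 1) = e n (m + 1) := by
  induction m with
  | zero => simp
  | succ m ih => rw [pow_succ', Module.End.mul_apply, ih, S_e n hn _ (by omega)]

/-- the family of derivations giving the lower bound -/
noncomputable def Psi (n : ℕ) (hn : 5 ≤ n) :
    ((Fin (n - 2) → ℂ) × ℂ) →ₗ[ℂ] Module.End ℂ (Fin n → ℂ) :=
  (Fintype.linearCombination ℂ (fun m : Fin (n - 2) => S n hn ^ (m.val + 1))).coprod
    (LinearMap.toSpanSingleton ℂ _ (E n hn))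

lemma Psi_apply (n : ℕ) (hn : 5 ≤ n) (p : (Fin (n - 2) → ℂ) × ℂ) :
    Psi n hn p = (∑ m, p.1 m • S n hn ^ (m.val + 1)) + p.2 • E n hn := by
  simp [Psi, Fintype.linearCombination_apply]

lemma Psi_inj (n : ℕ) (hn : 5 ≤ n) : Function.Injective (Psi n hn) := by
  rw [← LinearMap.ker_eq_bot, LinearMap.ker_eq_bot']
  rintro ⟨c, t⟩ h
  rw [Psi_apply] at h
  simp only at h
  have hc : c = 0 := by
    funext m
    have hm := m.2
    have h1 := congrFun (congrArg (fun f => f (e n 1)) h) ⟨m.val + 2, by omega⟩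
    simp only [LinearMap.add_apply, LinearMap.sum_apply, LinearMap.smul_apply, S_pow_e1,
      E_apply, Pi.add_apply, Finset.sum_apply, Pi.smul_apply, e] at h1
    simpa [← Fin.ext_iff] using h1
  subst hc
  have h1 := congrFun (congrArg (fun f => f (e n 0)) h) ⟨n - 1, by omega⟩
  have ht : t = 0 := by simpa [E_apply, e] using h1
  rw [ht]
  rfl

lemma lower (n : ℕ) (hn : 5 ≤ n) (α : ℕ → ℂ) (θ : ℂ) :
    n - 1 ≤ Module.finrank ℂ (derivations n (structMul n (cFLb n α θ))) := by
  have hr := LinearMap.finrank_range_of_inj (Psi_inj n hn)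
  have hle : LinearMap.range (Psi n hn) ≤ derivations n (structMul n (cFLb n α θ)) := by
    rintro _ ⟨p, rfl⟩
    rw [Psi_apply]
    apply Submodule.add_mem
    · exact Submodule.sum_mem _ fun m _ => Submodule.smul_mem _ _ (S_pow_mem n hn α θ m.val)
    · exact Submodule.smul_mem _ _ (E_mem n hn α θ)
  have := Submodule.finrank_mono hle
  rw [hr] at this
  simp only [Module.finrank_prod, Module.finrank_fin_fun, Module.finrank_self] at this
  omega

/-- the map giving the upper bound -/
noncomputable def Phi (n : ℕ) (hn : 5 ≤ n) :
    Module.End ℂ (Fin n → ℂ) →ₗ[ℂ] ((Fin n → ℂ) × ℂ) :=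
  (LinearMap.applyₗ (e n 0)).prod
    ((LinearMap.proj (⟨n - 1, by omega⟩ : Fin n)).comp (LinearMap.applyₗ (e n 1)))

lemma der_zero (n : ℕ) (hn : 5 ≤ n) (α : ℕ → ℂ) (θ : ℂ) (d : Module.End ℂ (Fin n → ℂ))
    (hd : d ∈ derivations n (structMul n (cFLb n α θ)))
    (h0 : d (e n 0) = 0) (h1 : d (e n 1) ⟨n - 1, by omega⟩ = 0) : d = 0 := by
  have hS : ∀ x, d (S n hn x) = S n hn (d x) := by
    intro x
    have := hd x (e n 0)
    rw [h0, map_zero, add_zero, mul_eq n hn, mul_eq n hn] at this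
    simpa [e] using this
  have hge : ∀ j, d (e n (j + 2)) = 0 := by
    intro j
    induction j with
    | zero => rw [← S_e0 n hn, hS, h0, map_zero]
    | succ j ih => rw [← S_e n hn (j + 2) (by omega), hS, ih, map_zero]
  have hv : ∀ x : Fin n → ℂ, x ⟨0, by omega⟩ = 0 → x ⟨1, by omega⟩ = 0 → d x = 0 := by
    intro x hx0 hx1
    rw [decomp n x, map_sum]
    apply Finset.sum_eq_zero
    rintro ⟨j, hj⟩ _
    rw [map_smul]
    match j, hj with
    | 0, hj => rw [hx0, zero_smul]
    | 1, hj => rw [hx1, zero_smul]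
    | j + 2, hj => rw [hge, smul_zero]
  have hb : S n hn (d (e n 1)) = 0 := by
    rw [← hS, S_e n hn 1 le_rfl]
    exact hge 0
  have hb01 := congrFun hb ⟨2, by omega⟩
  rw [S_apply] at hb01
  simp only [if_true, Pi.zero_apply] at hb01
  have hb0 : d (e n 1) ⟨0, by omega⟩ = 0 := by
    have h := hd (e n 0) (e n 1)
    rw [h0, map_zero, LinearMap.zero_apply, zero_add, hv, mul_eq n hn] at h
    · have h2 := congrFun h ⟨2, by omega⟩
      rw [Pi.add_apply, Pi.smul_apply, Pi.smul_apply, T_lt n hn _ _ _ _ (by simp), S_e0] at h2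
      simpa [e] using h2.symm
    · rw [mul_eq n hn, Pi.add_apply, Pi.smul_apply, Pi.smul_apply, S_0,
        T_lt n hn _ _ _ _ (by simp)]
      simp
    · rw [mul_eq n hn, Pi.add_apply, Pi.smul_apply, Pi.smul_apply, S_1,
        T_lt n hn _ _ _ _ (by simp)]
      simp
  rw [hb0, zero_add] at hb01
  have hd1 : d (e n 1) = 0 := by
    funext k
    have hk := k.2
    by_cases k0 : k.val = 0
    · have : k = ⟨0, by omega⟩ := Fin.ext k0
      rw [this, hb0]; rfl
    by_cases k1 : k.val = 1
    · have : k = ⟨1, by omega⟩ := Fin.ext k1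
      rw [this, hb01]; rfl
    by_cases kl : k.val = n - 1
    · have : k = ⟨n - 1, by omega⟩ := Fin.ext kl
      rw [this, h1]; rfl
    have h := congrFun hb ⟨k.val + 1, by omega⟩
    rw [S_apply] at h
    simp only at h
    rw [if_neg (by omega), if_pos (by omega)] at h
    exact h
  apply end_ext
  rintro ⟨j, hj⟩
  match j, hj with
  | 0, hj => exact h0
  | 1, hj => exact hd1
  | j + 2, hj => exact hge j

lemma upper (n : ℕ) (hn : 5 ≤ n) (α : ℕ → ℂ) (θ : ℂ) :
    Module.finrank ℂ (derivations n (structMul n (cFLb n α θ))) ≤ n + 1 := by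
  have hinj : Function.Injective
      ((Phi n hn).comp (derivations n (structMul n (cFLb n α θ))).subtype) := by
    rw [injective_iff_map_eq_zero]
    rintro ⟨d, hd⟩ h
    have h0 : d (e n 0) = 0 := congrArg Prod.fst h
    have h1 : d (e n 1) ⟨n - 1, by omega⟩ = 0 := congrArg Prod.snd h
    exact Subtype.ext (der_zero n hn α θ d hd h0 h1)
  have := LinearMap.finrank_le_finrank_of_injective hinj
  simpa only [Module.finrank_prod, Module.finrank_fin_fun, Module.finrank_self] using this

end FLb

theorem dim_der_FLb_bounds (n : ℕ) (hn : 5 ≤ n) (α : ℕ → ℂ) (θ : ℂ) :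
    n - 1 ≤ Module.finrank ℂ (derivations n (structMul n (cFLb n α θ))) ∧
      Module.finrank ℂ (derivations n (structMul n (cFLb n α θ))) ≤ n + 1 := by
  exact ⟨FLb.lower n hn α θ, FLb.upper n hn α θ⟩
end

section
/- Let n ≥ 5 and L = L(α₄,…,αₙ,θ) ∈ FLbₙ. If θ ≠ 0 and αᵢ = 0 for all 4 ≤ i ≤ n, then dim Der(L) = n. -/
open scoped BigOperators

/-- Basis vector with a natural number index (zero if out of range). -/
noncomputable def eV (n k : ℕ) : Fin n → ℂ := fun i => if i.val = k then 1 else 0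

/-- Right multiplication by `e₁`. -/
noncomputable def shiftS (n : ℕ) (hn : 5 ≤ n) : Module.End ℂ (Fin n → ℂ) where
  toFun x := fun k => if k.val = 2 then x ⟨0, by omega⟩ + x ⟨1, by omega⟩
    else if 3 ≤ k.val then x ⟨k.val - 1, by omega⟩ else 0
  map_add' x y := by
    funext k; simp only [Pi.add_apply]; split_ifs <;> ring
  map_smul' a x := by
    funext k; simp only [Pi.smul_apply, smul_eq_mul, RingHom.id_apply]; split_ifs <;> ring

theorem shiftS_apply (n : ℕ) (hn : 5 ≤ n) (x : Fin n → ℂ) (k : Fin n) :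
    shiftS n hn x k = if k.val = 2 then x ⟨0, by omega⟩ + x ⟨1, by omega⟩
    else if 3 ≤ k.val then x ⟨k.val - 1, by omega⟩ else 0 := rfl

theorem shiftS_e0 (n : ℕ) (hn : 5 ≤ n) : shiftS n hn (eV n 0) = eV n 2 := by
  funext k
  simp only [shiftS_apply, eV]
  split_ifs <;> first | omega | contradiction | simp

theorem shiftS_e (n : ℕ) (hn : 5 ≤ n) (j : ℕ) (hj : 1 ≤ j) :
    shiftS n hn (eV n j) = eV n (j + 1) := by
  funext k
  simp only [shiftS_apply, eV]
  split_ifs <;> first | omega | contradiction | simp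

theorem shiftS_pow_e (n : ℕ) (hn : 5 ≤ n) (i j : ℕ) (hj : 1 ≤ j) :
    (shiftS n hn ^ i) (eV n j) = eV n (i + j) := by
  induction i with
  | zero => simp
  | succ i ih =>
    rw [pow_succ', Module.End.mul_apply, ih, shiftS_e n hn _ (by omega)]
    congr 1; omega

theorem shiftS_pow_e0 (n : ℕ) (hn : 5 ≤ n) (i : ℕ) :
    (shiftS n hn ^ (i + 1)) (eV n 0) = eV n (i + 2) := by
  rw [pow_succ, Module.End.mul_apply, shiftS_e0, shiftS_pow_e n hn _ _ (by omega)]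

theorem eV_eq_single (n : ℕ) (i : Fin n) : eV n i.val = Pi.single i 1 := by
  funext k
  simp [eV, Pi.single_apply, Fin.ext_iff]

theorem eV_big (n k : ℕ) (h : n ≤ k) : eV n k = 0 := by
  funext i
  have := i.isLt
  simp only [eV, Pi.zero_apply]
  rw [if_neg (by omega)]

theorem structMul_single (n : ℕ) (c : Fin n → Fin n → Fin n → ℂ) (i j k : Fin n) :
    structMul n c (Pi.single i 1) (Pi.single j 1) k = c i j k := by
  simp [structMul, Pi.single_apply]

/-- The target form of the product. -/
noncomputable def tMul (n : ℕ) (hn : 5 ≤ n) (θ : ℂ) :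
    (Fin n → ℂ) →ₗ[ℂ] (Fin n → ℂ) →ₗ[ℂ] (Fin n → ℂ) :=
  LinearMap.mk₂ ℂ (fun x y => y ⟨0, by omega⟩ • shiftS n hn x
      + (y ⟨1, by omega⟩ * x ⟨0, by omega⟩ * θ) • eV n (n - 1))
    (by intro x x' y; funext k; simp; ring)
    (by intro a x y; funext k; simp; ring)
    (by intro x y y'; funext k; simp; ring)
    (by intro a x y; funext k; simp; ring)

theorem tMul_apply (n : ℕ) (hn : 5 ≤ n) (θ : ℂ) (x y : Fin n → ℂ) :
    tMul n hn θ x y = y ⟨0, by omega⟩ • shiftS n hn x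
      + (y ⟨1, by omega⟩ * x ⟨0, by omega⟩ * θ) • eV n (n - 1) := rfl

theorem structMul_eq_s6 (n : ℕ) (hn : 5 ≤ n) (α : ℕ → ℂ) (θ : ℂ)
    (hα : ∀ i, 4 ≤ i → i ≤ n → α i = 0) :
    structMul n (cFLb n α θ) = tMul n hn θ := by
  refine (Pi.basisFun ℂ (Fin n)).ext fun i => (Pi.basisFun ℂ (Fin n)).ext fun j => ?_
  funext k
  simp only [Pi.basisFun_apply]
  rw [structMul_single, tMul_apply, ← eV_eq_single, ← eV_eq_single]
  have hi := i.isLt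
  have hj := j.isLt
  have hk := k.isLt
  have h1 : (if 3 ≤ k.val ∧ k.val ≤ n - 2 then α (k.val + 1)
        else if k.val = n - 1 then θ else 0) = if k.val = n - 1 then θ else 0 := by
    split_ifs <;> first | omega | rfl | exact hα _ (by omega) (by omega)
  have h2 : (if 1 ≤ i.val ∧ i.val ≤ n - 3 ∧ i.val + 2 ≤ k.val
      then α (k.val - i.val + 2) else 0) = 0 := by
    split_ifs <;> first | rfl | exact hα _ (by omega) (by omega)
  simp only [cFLb, h1, h2]
  rcases Nat.eq_zero_or_pos i.val with h0 | h0
  · rw [h0, shiftS_e0]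
    simp only [Pi.add_apply, Pi.smul_apply, smul_eq_mul, eV, true_and]
    split_ifs <;> first | omega | contradiction | simp
  · rw [shiftS_e n hn _ h0]
    simp only [Pi.add_apply, Pi.smul_apply, smul_eq_mul, eV]
    split_ifs <;> first | omega | contradiction | simp

theorem mem_der_iff (n : ℕ) (hn : 5 ≤ n) (θ : ℂ) (d : Module.End ℂ (Fin n → ℂ)) :
    d ∈ derivations n (tMul n hn θ) ↔
      ∀ x y, d (tMul n hn θ x y) = tMul n hn θ (d x) y + tMul n hn θ x (d y) := Iff.rfl

theorem pow_mem_der (n : ℕ) (hn : 5 ≤ n) (θ : ℂ) (i : ℕ) :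
    shiftS n hn ^ (i + 1) ∈ derivations n (tMul n hn θ) := by
  rw [mem_der_iff]
  intro x y
  have hz : ∀ (x : Fin n → ℂ) (k : Fin n), k.val ≤ 1 → (shiftS n hn ^ (i + 1)) x k = 0 := by
    intro x k hk
    rw [pow_succ', Module.End.mul_apply, shiftS_apply, if_neg (by omega), if_neg (by omega)]
  have hc : (shiftS n hn ^ (i + 1)) (shiftS n hn x) = shiftS n hn ((shiftS n hn ^ (i + 1)) x) := by
    rw [← Module.End.mul_apply, ← Module.End.mul_apply, ← pow_succ, ← pow_succ']
  simp only [tMul_apply, map_add, map_smul, hc]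
  rw [shiftS_pow_e n hn _ _ (by omega), eV_big n _ (by omega), hz x _ (by simp),
    hz y _ (by simp), hz y _ (by simp)]
  simp

/-- `x ↦ x₀ w`. -/
noncomputable def corr (n : ℕ) (hn : 5 ≤ n) (w : Fin n → ℂ) : Module.End ℂ (Fin n → ℂ) :=
  (LinearMap.proj (R := ℂ) (φ := fun _ : Fin n => ℂ) ⟨0, by omega⟩).smulRight w

theorem corr_apply (n : ℕ) (hn : 5 ≤ n) (w x : Fin n → ℂ) :
    corr n hn w x = x ⟨0, by omega⟩ • w := rfl

theorem E_mem_der (n : ℕ) (hn : 5 ≤ n) (θ : ℂ) :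
    corr n hn (eV n (n - 1)) ∈ derivations n (tMul n hn θ) := by
  rw [mem_der_iff]
  intro x y
  simp only [tMul_apply, corr_apply]
  simp only [map_add, map_smul, Pi.add_apply, Pi.smul_apply]
  rw [shiftS_e n hn _ (by omega), eV_big n (n - 1 + 1) (by omega)]
  have h0 : eV n (n - 1) ⟨0, by omega⟩ = 0 := if_neg (by simp; omega)
  have h1 : eV n (n - 1) ⟨1, by omega⟩ = 0 := if_neg (by simp; omega)
  simp [h0, h1, shiftS_apply]

theorem D_mem_der (n : ℕ) (hn : 5 ≤ n) (θ : ℂ) :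
    1 + corr n hn (eV n 1 - eV n 0 - θ • eV n (n - 2)) ∈ derivations n (tMul n hn θ) := by
  rw [mem_der_iff]
  intro x y
  simp only [tMul_apply, corr_apply, LinearMap.add_apply, Module.End.one_apply]
  simp only [map_add, map_sub, map_smul]
  rw [shiftS_e n hn (n - 2) (by omega), shiftS_e n hn 1 (by omega), shiftS_e0,
    show n - 2 + 1 = n - 1 by omega]
  have h0 : eV n (n - 1) ⟨0, by omega⟩ = 0 := if_neg (by simp; omega)
  have h2 : eV n (n - 2) ⟨0, by omega⟩ = 0 := if_neg (by simp; omega)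
  have h3 : eV n (n - 2) ⟨1, by omega⟩ = 0 := if_neg (by simp; omega)
  have h4 : eV n 1 ⟨1, by omega⟩ = 1 := if_pos rfl
  have h5 : eV n 1 ⟨0, by omega⟩ = 0 := if_neg (by simp)
  have h6 : eV n 0 ⟨0, by omega⟩ = 1 := if_pos rfl
  have h7 : eV n 0 ⟨1, by omega⟩ = 0 := if_neg (by simp)
  funext k
  simp [h0, h2, h3, h4, h5, h6, h7, shiftS_apply]
  ring

/-- Coordinates on derivations. -/
noncomputable def Phi (n : ℕ) (hn : 5 ≤ n) :
    Module.End ℂ (Fin n → ℂ) →ₗ[ℂ] (Fin n → ℂ) where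
  toFun d := fun k => if k.val = 0 then d (eV n 1) ⟨n - 1, by omega⟩ else d (eV n 0) k
  map_add' a b := by
    funext k; simp only [Pi.add_apply, LinearMap.add_apply]; split_ifs <;> rfl
  map_smul' a x := by
    funext k
    simp only [Pi.smul_apply, LinearMap.smul_apply, RingHom.id_apply]; split_ifs <;> rfl

theorem Phi_apply (n : ℕ) (hn : 5 ≤ n) (d : Module.End ℂ (Fin n → ℂ)) (k : Fin n) :
    Phi n hn d k = if k.val = 0 then d (eV n 1) ⟨n - 1, by omega⟩ else d (eV n 0) k := rfl

theorem Phi_surj (n : ℕ) (hn : 5 ≤ n) (θ : ℂ) (k : Fin n) :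
    ∃ d ∈ derivations n (tMul n hn θ), Phi n hn d = eV n k.val := by
  have hk := k.isLt
  have hE := E_mem_der n hn θ
  by_cases h1 : k.val = n - 1
  · refine ⟨_, hE, ?_⟩
    funext l
    simp only [Phi_apply, corr_apply, Pi.smul_apply, smul_eq_mul, eV, h1]
    split_ifs <;> first | omega | contradiction | simp
  by_cases h2 : k.val = 0
  · refine ⟨_, sub_mem (pow_mem_der n hn θ (n - 3)) hE, ?_⟩
    funext l
    simp only [Phi_apply, corr_apply, LinearMap.sub_apply, shiftS_pow_e0,
      shiftS_pow_e n hn _ 1 le_rfl, Pi.sub_apply, Pi.smul_apply, smul_eq_mul, eV, h2]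
    split_ifs <;> first | omega | contradiction | simp
  by_cases h3 : k.val = 1
  · refine ⟨_, add_mem (D_mem_der n hn θ)
      (Submodule.smul_mem _ θ (pow_mem_der n hn θ (n - 4))), ?_⟩
    funext l
    simp only [Phi_apply, corr_apply, LinearMap.add_apply, LinearMap.smul_apply, shiftS_pow_e0,
      Module.End.one_apply, Pi.add_apply,
      shiftS_pow_e n hn _ 1 le_rfl, Pi.sub_apply, Pi.smul_apply, smul_eq_mul, eV, h3]
    split_ifs <;> first | omega | contradiction | simp
  · refine ⟨_, pow_mem_der n hn θ (k.val - 2), ?_⟩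
    funext l
    simp only [Phi_apply, shiftS_pow_e0, shiftS_pow_e n hn _ 1 le_rfl, eV]
    split_ifs <;> first | omega | contradiction | simp

theorem Phi_inj (n : ℕ) (hn : 5 ≤ n) (θ : ℂ) (hθ : θ ≠ 0) (d : Module.End ℂ (Fin n → ℂ))
    (hd : d ∈ derivations n (tMul n hn θ)) (h : Phi n hn d = 0) : d = 0 := by
  rw [mem_der_iff] at hd
  simp only [tMul_apply, map_add, map_smul] at hd
  have h4 : eV n 1 ⟨1, by omega⟩ = 1 := if_pos rfl
  have h5 : eV n 1 ⟨0, by omega⟩ = 0 := if_neg (by simp)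
  have h6 : eV n 0 ⟨0, by omega⟩ = 1 := if_pos rfl
  have h7 : eV n 0 ⟨1, by omega⟩ = 0 := if_neg (by simp)
  have hΦ : ∀ k, Phi n hn d k = 0 := fun k => by rw [h]; rfl
  obtain ⟨a, ha⟩ : ∃ a, d (eV n 0) = a • eV n 0 := by
    refine ⟨d (eV n 0) ⟨0, by omega⟩, ?_⟩
    funext k
    by_cases hk : k.val = 0
    · have : k = ⟨0, by omega⟩ := Fin.ext hk
      rw [this]
      simp [h6]
    · have := hΦ k
      rw [Phi_apply, if_neg hk] at this
      simp [this, eV, hk]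
  have hbl : d (eV n 1) ⟨n - 1, by omega⟩ = 0 := by
    have := hΦ ⟨0, by omega⟩
    rwa [Phi_apply, if_pos rfl] at this
  have e00 := hd (eV n 0) (eV n 0)
  have e10 := hd (eV n 1) (eV n 0)
  have e11 := hd (eV n 1) (eV n 1)
  have e01 := hd (eV n 0) (eV n 1)
  simp only [ha, map_smul, shiftS_e0, shiftS_e n hn 1 le_rfl, h4, h5, h6, h7,
    Pi.smul_apply, smul_eq_mul, mul_one, mul_zero, zero_mul, one_mul, zero_smul, one_smul,
    add_zero, zero_add] at e00 e10 e11 e01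
  have hb0 : d (eV n 1) ⟨0, by omega⟩ = 0 := by
    have := congrFun e11 ⟨2, by omega⟩
    have h8 : eV n 2 ⟨2, by omega⟩ = 1 := if_pos rfl
    have h9 : eV n (n - 1) ⟨2, by omega⟩ = 0 := if_neg (by simp; omega)
    simpa [h8, h9] using this.symm
  have hSb : shiftS n hn (d (eV n 1)) = a • eV n 2 := by
    have : shiftS n hn (d (eV n 1)) + a • eV n 2 = a • eV n 2 + a • eV n 2 := by
      rw [← e10, ← e00]
    exact add_right_cancel this
  have hb : d (eV n 1) = a • eV n 1 := by
    funext k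
    have hk := k.isLt
    by_cases k0 : k.val = 0
    · have : k = ⟨0, by omega⟩ := Fin.ext k0
      rw [this]
      simp [hb0, h5]
    by_cases k1 : k.val = 1
    · have : k = ⟨1, by omega⟩ := Fin.ext k1
      rw [this]
      have := congrFun hSb ⟨2, by omega⟩
      simpa [shiftS_apply, eV, hb0] using this
    by_cases kl : k.val = n - 1
    · have : k = ⟨n - 1, by omega⟩ := Fin.ext kl
      rw [this]
      rw [hbl]
      simp [eV]; omega
    · have := congrFun hSb ⟨k.val + 1, by omega⟩
      simpa [shiftS_apply, eV, k0, k1, show 2 ≤ k.val by omega] using this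
  have hrec : ∀ k : ℕ, d (eV n (k + 1)) = (((k : ℂ) + 1) * a) • eV n (k + 1) := by
    intro k
    induction k with
    | zero => simpa using hb
    | succ k ih =>
      have := hd (eV n (k + 1)) (eV n 0)
      have h10 : eV n (k + 1) ⟨0, by omega⟩ = 0 := if_neg (by simp)
      simp only [ih, ha, map_smul, shiftS_e n hn (k + 1) (by omega), h6, h7, h10,
        Pi.smul_apply, smul_eq_mul, mul_one, mul_zero, zero_mul, zero_smul, one_smul,
        add_zero] at this
      rw [this, ← add_smul]
      congr 1
      push_cast
      ring
  have ha0 : a = 0 := by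
    have hl := hrec (n - 2)
    rw [show n - 2 + 1 = n - 1 by omega] at hl
    rw [hl, hb] at e01
    have h11 : eV n (n - 1) ⟨n - 1, by omega⟩ = 1 := if_pos rfl
    have h12 : eV n 2 ⟨n - 1, by omega⟩ = 0 := if_neg (by simp; omega)
    have := congrFun e01 ⟨n - 1, by omega⟩
    simp [h11, h12, h4, h5] at this
    have h13 : θ * a * ((n : ℂ) - 3) = 0 := by
      rw [Nat.cast_sub (by omega)] at this
      push_cast at this
      linear_combination this
    have h14 : (n : ℂ) - 3 ≠ 0 := by
      rw [sub_ne_zero]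
      exact_mod_cast (by omega : n ≠ 3)
    simpa [hθ, h14] using h13
  refine (Pi.basisFun ℂ (Fin n)).ext fun i => ?_
  rw [Pi.basisFun_apply, ← eV_eq_single, LinearMap.zero_apply]
  rcases Nat.eq_zero_or_pos i.val with hi | hi
  · rw [hi, ha, ha0, zero_smul]
  · obtain ⟨k, hk⟩ : ∃ k, i.val = k + 1 := ⟨i.val - 1, by omega⟩
    rw [hk, hrec, ha0, mul_zero, zero_smul]

theorem dim_der_FLb_case2 (n : ℕ) (hn : 5 ≤ n) (α : ℕ → ℂ) (θ : ℂ)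
    (hθ : θ ≠ 0) (hα : ∀ i, 4 ≤ i → i ≤ n → α i = 0) :
    Module.finrank ℂ (derivations n (structMul n (cFLb n α θ))) = n := by
  rw [structMul_eq_s6 n hn α θ hα]
  let Ψ := (Phi n hn).comp (derivations n (tMul n hn θ)).subtype
  have hinj : Function.Injective Ψ := by
    rw [injective_iff_map_eq_zero]
    intro d hd
    exact Subtype.ext (Phi_inj n hn θ hθ d.1 d.2 hd)
  have hsurj : Function.Surjective Ψ := by
    rw [← LinearMap.range_eq_top, eq_top_iff, ← (Pi.basisFun ℂ (Fin n)).span_eq,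
      Submodule.span_le]
    rintro _ ⟨i, rfl⟩
    obtain ⟨d, hd, h⟩ := Phi_surj n hn θ i
    refine ⟨⟨d, hd⟩, ?_⟩
    rw [Pi.basisFun_apply, ← eV_eq_single]
    exact h
  rw [(LinearEquiv.ofBijective Ψ ⟨hinj, hsurj⟩).finrank_eq, Module.finrank_fin_fun]
end

section
/- Let n ≥ 7 and L = L(α₄,…,αₙ,θ) ∈ FLbₙ. If θ ≠ 0, α₄ ≠ 0, α₅ ≠ 0 and αᵢ = 0 for all 6 ≤ i ≤ n, then dim Der(L) = n − 1. -/
open scoped BigOperators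

namespace FLbAux

/-- basis vector, zero when out of range -/
noncomputable def e (n k : ℕ) : Fin n → ℂ := fun i => if i.val = k then 1 else 0

lemma e_apply (n k : ℕ) (i : Fin n) : e n k i = if i.val = k then 1 else 0 := rfl

lemma e_fin (n : ℕ) (i : Fin n) : e n i.val = Pi.basisFun ℂ (Fin n) i := by
  funext j
  simp only [e_apply, Pi.basisFun_apply, Pi.single_apply, Fin.ext_iff]

lemma e_zero (n k : ℕ) (h : n ≤ k) : e n k = 0 := by
  funext j
  have := j.2
  simp only [e_apply, Pi.zero_apply]
  rw [if_neg (by omega)]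

lemma ext_e {n : ℕ} {f g : Module.End ℂ (Fin n → ℂ)} (h : ∀ k, k < n → f (e n k) = g (e n k)) :
    f = g := by
  refine (Pi.basisFun ℂ (Fin n)).ext fun i => ?_
  rw [← e_fin]
  exact h i i.2

lemma mul_e (n : ℕ) (c : Fin n → Fin n → Fin n → ℂ) (x : Fin n → ℂ) (j k : Fin n) :
    structMul n c x (e n j.val) k = ∑ i, x i * c i j k := by
  simp only [structMul, LinearMap.mk₂_apply, e_apply, ← Fin.ext_iff]
  simp

lemma mul_e_e (n : ℕ) (c : Fin n → Fin n → Fin n → ℂ) (i j k : Fin n) :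
    structMul n c (e n i.val) (e n j.val) k = c i j k := by
  rw [mul_e]
  simp only [e_apply, ← Fin.ext_iff]
  simp

section
variable {n : ℕ} (α : ℕ → ℂ) (θ : ℂ)

lemma S_e0 (hn : 7 ≤ n) : structMul n (cFLb n α θ) (e n 0) (e n 0) = e n 2 := by
  funext k
  have := mul_e_e n (cFLb n α θ) ⟨0, by omega⟩ ⟨0, by omega⟩ k
  simp only at this
  rw [this]
  simp [cFLb, e_apply]

lemma S_e (hn : 7 ≤ n) (j : ℕ) (hj : 1 ≤ j) :
    structMul n (cFLb n α θ) (e n j) (e n 0) = e n (j+1) := by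
  by_cases h : j < n
  · funext k
    have := mul_e_e n (cFLb n α θ) ⟨j, h⟩ ⟨0, by omega⟩ k
    simp only at this
    rw [this]
    have := k.2
    simp only [cFLb, e_apply]
    split_ifs <;> first | rfl | omega
  · rw [e_zero n j (by omega), e_zero n (j+1) (by omega)]; simp

lemma P_e0 (hn : 7 ≤ n) (hα : ∀ i, 6 ≤ i → i ≤ n → α i = 0) :
    structMul n (cFLb n α θ) (e n 0) (e n 1) = α 4 • e n 3 + α 5 • e n 4 + θ • e n (n-1) := by
  funext k
  have := mul_e_e n (cFLb n α θ) ⟨0, by omega⟩ ⟨1, by omega⟩ k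
  simp only at this
  rw [this]
  have hk := k.2
  simp only [cFLb, e_apply, Pi.add_apply, Pi.smul_apply, smul_eq_mul]
  by_cases h3 : k.val = 3
  · simp [h3, show 3 ≤ n - 2 by omega, show 3 ≠ n - 1 by omega]
  by_cases h4 : k.val = 4
  · simp [h4, show 4 ≤ n - 2 by omega, show 4 ≠ n - 1 by omega]
  by_cases h5 : k.val = n - 1
  · simp [h5, show ¬ (n - 1 ≤ n - 2) by omega, show n - 1 ≠ 3 by omega, show n - 1 ≠ 4 by omega]
  simp only [h3, h4, h5, if_false, mul_zero, add_zero]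
  simp
  intro h6 h7
  exact hα _ (by omega) (by omega)

lemma P_e (hn : 7 ≤ n) (hα : ∀ i, 6 ≤ i → i ≤ n → α i = 0) (j : ℕ) (hj : 1 ≤ j) :
    structMul n (cFLb n α θ) (e n j) (e n 1) = α 4 • e n (j+2) + α 5 • e n (j+3) := by
  by_cases h : j < n
  · funext k
    have := mul_e_e n (cFLb n α θ) ⟨j, h⟩ ⟨1, by omega⟩ k
    simp only at this
    rw [this]
    have hk := k.2
    simp only [cFLb, e_apply, Pi.add_apply, Pi.smul_apply, smul_eq_mul]
    by_cases h3 : k.val = j + 2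
    · have : j + 2 - j + 2 = 4 := by omega
      simp [h3, hj, show j ≤ n - 3 by omega, show j ≠ 0 by omega]
    by_cases h4 : k.val = j + 3
    · have : j + 3 - j + 2 = 5 := by omega
      simp [h4, hj, show j ≤ n - 3 by omega, show j ≠ 0 by omega]
    simp only [h3, h4, if_false, mul_zero, add_zero]
    rw [if_neg (by omega), if_pos trivial, if_neg (by omega)]
    split_ifs
    · exact hα _ (by omega) (by omega)
    · rfl
  · rw [e_zero n j (by omega), e_zero n (j+2) (by omega), e_zero n (j+3) (by omega)]; simp

lemma mul_e_big (x : Fin n → ℂ) (j : ℕ) (hj : 2 ≤ j) :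
    structMul n (cFLb n α θ) x (e n j) = 0 := by
  by_cases h : j < n
  · funext k
    have := mul_e n (cFLb n α θ) x ⟨j, h⟩ k
    simp only at this
    rw [this]
    simp [cFLb, show j ≠ 0 by omega, show j ≠ 1 by omega]
  · rw [e_zero n j (by omega)]; simp

/-- right multiplication -/
noncomputable def R (j : ℕ) : Module.End ℂ (Fin n → ℂ) := (structMul n (cFLb n α θ)).flip (e n j)

lemma R_apply (j : ℕ) (x : Fin n → ℂ) :
    R α θ j x = structMul n (cFLb n α θ) x (e n j) := rfl

lemma S_low (hn : 7 ≤ n) (x : Fin n → ℂ) (k : Fin n) (hk : k.val ≤ 1) :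
    R α θ 0 x k = 0 := by
  have := mul_e n (cFLb n α θ) x ⟨0, by omega⟩ k
  simp only at this
  rw [R_apply, this]
  refine Finset.sum_eq_zero fun i _ => ?_
  simp only [cFLb]
  rw [if_pos trivial, if_neg (by omega), if_neg (by omega), mul_zero]

lemma S_two (hn : 7 ≤ n) (x : Fin n → ℂ) :
    R α θ 0 x ⟨2, by omega⟩ = x ⟨0, by omega⟩ + x ⟨1, by omega⟩ := by
  have := mul_e n (cFLb n α θ) x ⟨0, by omega⟩ ⟨2, by omega⟩
  simp only at this
  rw [R_apply, this]
  have : ∀ i : Fin n, x i * cFLb n α θ i ⟨0, by omega⟩ ⟨2, by omega⟩ =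
      (if i = ⟨0, by omega⟩ then x i else 0) + (if i = ⟨1, by omega⟩ then x i else 0) := by
    intro i
    simp only [cFLb, Fin.ext_iff]
    split_ifs <;> first | omega | (simp; done) | (exfalso; simp_all; done)
  simp only [this, Finset.sum_add_distrib]
  simp

lemma S_high (hn : 7 ≤ n) (x : Fin n → ℂ) (k : ℕ) (hk : 2 ≤ k) (hkn : k + 1 < n) :
    R α θ 0 x ⟨k+1, hkn⟩ = x ⟨k, by omega⟩ := by
  have := mul_e n (cFLb n α θ) x ⟨0, by omega⟩ ⟨k+1, hkn⟩
  simp only at this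
  rw [R_apply, this]
  have : ∀ i : Fin n, x i * cFLb n α θ i ⟨0, by omega⟩ ⟨k+1, hkn⟩ =
      (if i = ⟨k, by omega⟩ then x i else 0) := by
    intro i
    simp only [cFLb, Fin.ext_iff]
    split_ifs <;> first | omega | (simp; done) | (exfalso; simp_all; done)
  simp only [this]
  simp

/-- Any linear map into an additive group: expand in coordinates 0,1. -/
lemma mul_formula (hn : 7 ≤ n) (x y : Fin n → ℂ) :
    structMul n (cFLb n α θ) x y =
      y ⟨0, by omega⟩ • R α θ 0 x + y ⟨1, by omega⟩ • R α θ 1 x := by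
  have : structMul n (cFLb n α θ) x =
      (LinearMap.proj (⟨0, by omega⟩ : Fin n) : (Fin n → ℂ) →ₗ[ℂ] ℂ).smulRight (R α θ 0 x)
      + (LinearMap.proj (⟨1, by omega⟩ : Fin n) : (Fin n → ℂ) →ₗ[ℂ] ℂ).smulRight (R α θ 1 x) := by
    refine ext_e fun k hk => ?_
    simp only [LinearMap.add_apply, LinearMap.smulRight_apply, LinearMap.proj_apply, e_apply]
    rcases Nat.lt_or_ge k 2 with h | h
    · interval_cases k <;> simp [R_apply]
    · rw [mul_e_big α θ x k h, if_neg (by omega), if_neg (by omega)]; simp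
  rw [this]; simp

lemma P_form (hn : 7 ≤ n) (hα : ∀ i, 6 ≤ i → i ≤ n → α i = 0) :
    ∀ x : Fin n → ℂ, R α θ 1 x = α 4 • R α θ 0 (R α θ 0 x)
      + α 5 • R α θ 0 (R α θ 0 (R α θ 0 x)) + (θ * x ⟨0, by omega⟩) • e n (n-1) := by
  have Se : ∀ j, 1 ≤ j → R α θ 0 (e n j) = e n (j+1) := fun j hj => S_e α θ hn j hj
  have Pe : ∀ j, 1 ≤ j → R α θ 1 (e n j) = α 4 • e n (j+2) + α 5 • e n (j+3) :=
    fun j hj => P_e α θ hn hα j hj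
  have : R α θ 1 = α 4 • (R α θ 0 * R α θ 0) + α 5 • (R α θ 0 * (R α θ 0 * R α θ 0)) +
    (LinearMap.proj (⟨0, by omega⟩ : Fin n) : (Fin n → ℂ) →ₗ[ℂ] ℂ).smulRight (θ • e n (n-1)) := by
    refine ext_e fun k hk => ?_
    simp only [LinearMap.add_apply, LinearMap.smulRight_apply, LinearMap.proj_apply, e_apply,
      LinearMap.smul_apply, Module.End.mul_apply]
    rcases Nat.eq_zero_or_pos k with h | h
    · subst h
      have h0 : R α θ 0 (e n 0) = e n 2 := S_e0 α θ hn
      have h1 : R α θ 1 (e n 0) = _ := P_e0 α θ hn hα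
      rw [h0, h1, Se 2 (by omega), Se 3 (by omega)]; simp
    · rw [Pe k h, Se k h, Se (k+1) (by omega), Se (k+2) (by omega), if_neg (by omega)]
      simp
  intro x
  rw [this]
  simp [smul_smul, mul_comm]

lemma key (hn : 7 ≤ n) (hθ : θ ≠ 0) (h4 : α 4 ≠ 0) (h5 : α 5 ≠ 0)
    (hα : ∀ i, 6 ≤ i → i ≤ n → α i = 0) (d : Module.End ℂ (Fin n → ℂ))
    (hd : d ∈ derivations n (structMul n (cFLb n α θ))) :
    d (e n 0) ⟨0, by omega⟩ = 0 ∧ d (e n 0) ⟨1, by omega⟩ = 0 ∧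
    d (e n 1) ⟨0, by omega⟩ = 0 ∧ d (e n 1) ⟨1, by omega⟩ = 0 ∧
    ∀ x, d (R α θ 0 x) = R α θ 0 (d x) := by
  have hd' : ∀ x y, d (structMul n (cFLb n α θ) x y) =
    structMul n (cFLb n α θ) (d x) y + structMul n (cFLb n α θ) x (d y) := hd
  have I : ∀ x, d (R α θ 0 x) = R α θ 0 (d x) + (d (e n 0) ⟨0, by omega⟩ • R α θ 0 x
      + d (e n 0) ⟨1, by omega⟩ • R α θ 1 x) := by
    intro x
    rw [R_apply, hd', mul_formula α θ hn x]; rfl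
  have II : ∀ x, d (R α θ 1 x) = R α θ 1 (d x) + (d (e n 1) ⟨0, by omega⟩ • R α θ 0 x
      + d (e n 1) ⟨1, by omega⟩ • R α θ 1 x) := by
    intro x
    rw [R_apply, hd', mul_formula α θ hn x]; rfl
  have Se : ∀ j, 1 ≤ j → R α θ 0 (e n j) = e n (j+1) := fun j hj => S_e α θ hn j hj
  have Pe : ∀ j, 1 ≤ j → R α θ 1 (e n j) = α 4 • e n (j+2) + α 5 • e n (j+3) :=
    fun j hj => P_e α θ hn hα j hj
  have Pform := P_form α θ hn hα
  set a0 := d (e n 0) ⟨0, by omega⟩ with ha0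
  set a1 := d (e n 0) ⟨1, by omega⟩ with ha1
  set b0 := d (e n 1) ⟨0, by omega⟩ with hb0
  set b1 := d (e n 1) ⟨1, by omega⟩ with hb1
  set v := d (e n 1) with hv
  have d2 : d (e n 2) = R α θ 0 v + (a0 • e n 2 + a1 • (α 4 • e n 3 + α 5 • e n 4)) := by
    have := I (e n 1)
    rwa [Se 1 le_rfl, Pe 1 le_rfl] at this
  have d3 : d (e n 3) = R α θ 0 (R α θ 0 v) + (2 * a0) • e n 3 +
      (2 * a1) • (α 4 • e n 4 + α 5 • e n 5) := by
    have := I (e n 2)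
    rw [Se 2 (by omega), Pe 2 (by omega), d2] at this
    simp only [map_add, map_smul, Se 2 (by omega), Se 3 (by omega), Se 4 (by omega)] at this
    rw [this]; module
  have d4 : d (e n 4) = R α θ 0 (R α θ 0 (R α θ 0 v)) + (3 * a0) • e n 4 +
      (3 * a1) • (α 4 • e n 5 + α 5 • e n 6) := by
    have := I (e n 3)
    rw [Se 3 (by omega), Pe 3 (by omega), d3] at this
    simp only [map_add, map_smul, Se 5 (by omega), Se 3 (by omega), Se 4 (by omega)] at this
    rw [this]; module
  have main := II (e n 1)
  rw [Pe 1 le_rfl, Se 1 le_rfl, map_add, map_smul, map_smul, d3, d4, ← hv, Pform v, ← hb0] at main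
  have main2 : (α 4) • ((2 * a0) • e n 3 + (2 * a1) • (α 4 • e n 4 + α 5 • e n 5))
      + α 5 • ((3 * a0) • e n 4 + (3 * a1) • (α 4 • e n 5 + α 5 • e n 6)) =
      (θ * b0) • e n (n-1) + (b0 • e n 2 + b1 • (α 4 • e n 3 + α 5 • e n 4)) := by
    rw [← sub_eq_zero] at main ⊢
    rw [← main]
    module
  have c2 := congrFun main2 ⟨2, by omega⟩
  have c3 := congrFun main2 ⟨3, by omega⟩
  have c4 := congrFun main2 ⟨4, by omega⟩
  have c5 := congrFun main2 ⟨5, by omega⟩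
  simp [e_apply, show 2 ≠ n - 1 by omega] at c2
  simp [e_apply, show 3 ≠ n - 1 by omega] at c3
  simp [e_apply, show 4 ≠ n - 1 by omega] at c4
  simp [e_apply, show 5 ≠ n - 1 by omega] at c5
  have A1 : a1 = 0 := by
    have : (α 4 * α 5) * a1 = 0 := by linear_combination c5 / 5
    simpa [h4, h5] using this
  have B1 : b1 = 2 * a0 := by
    apply mul_left_cancel₀ h4
    linear_combination -c3
  have A0 : a0 = 0 := by
    have : α 5 * a0 = 0 := by
      rw [A1, B1] at c4
      linear_combination c4
    simpa [h5] using this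
  refine ⟨A0, A1, ?_, ?_, ?_⟩
  · first | exact c2 | exact c2.symm
  · rw [B1, A0]; simp
  · intro x; rw [I x, A0, A1]; simp

/-- candidate image vectors -/
noncomputable def w (v0 v1 : Fin n → ℂ) : ℕ → (Fin n → ℂ)
  | 0 => v0
  | k+1 => ((R α θ 0) ^ k) v1

lemma Spow_low (hn : 7 ≤ n) (v : Fin n → ℂ) (hv : ∀ i : Fin n, i.val ≤ 1 → v i = 0) (k : ℕ) :
    ∀ i : Fin n, i.val ≤ k + 1 → ((R α θ 0) ^ k) v i = 0 := by
  induction k with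
  | zero => intro i hi; simpa using hv i hi
  | succ k ih =>
    intro i hi
    rw [pow_succ', Module.End.mul_apply]
    rcases i with ⟨i, hin⟩
    rcases Nat.lt_or_ge i 2 with h | h
    · exact S_low α θ hn _ _ (by simp only; omega)
    rcases Nat.eq_or_lt_of_le h with h | h
    · subst h
      rw [S_two α θ hn, ih _ (by simp), ih _ (by simp), add_zero]
    · obtain ⟨j, rfl⟩ : ∃ j, i = j + 1 := ⟨i - 1, by omega⟩
      rw [S_high α θ hn _ j (by omega) hin]
      exact ih _ (by simp only at hi ⊢; omega)

lemma exists_der (hn : 7 ≤ n) (hα : ∀ i, 6 ≤ i → i ≤ n → α i = 0) (v0 v1 : Fin n → ℂ)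
    (hv0 : ∀ i : Fin n, i.val ≤ 1 → v0 i = 0) (hv1 : ∀ i : Fin n, i.val ≤ 1 → v1 i = 0)
    (h01 : ∀ i : Fin n, i.val < n - 1 → v0 i = v1 i) :
    ∃ d ∈ derivations n (structMul n (cFLb n α θ)), d (e n 0) = v0 ∧ d (e n 1) = v1 := by
  have wlow : ∀ k, ∀ i : Fin n, i.val ≤ 1 → w α θ v0 v1 k i = 0 := by
    intro k i hi
    cases k with
    | zero => exact hv0 i hi
    | succ k => exact Spow_low α θ hn v1 hv1 k i (by omega)
  have wbig : ∀ k, n - 1 ≤ k → w α θ v0 v1 k = 0 := by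
    intro k hk
    obtain ⟨j, rfl⟩ : ∃ j, k = j + 1 := ⟨k - 1, by omega⟩
    funext i
    have := i.2
    exact Spow_low α θ hn v1 hv1 j i (by omega)
  let d : Module.End ℂ (Fin n → ℂ) :=
    (Pi.basisFun ℂ (Fin n)).constr ℂ (fun i : Fin n => w α θ v0 v1 i.val)
  have hde : ∀ k, d (e n k) = w α θ v0 v1 k := by
    intro k
    by_cases h : k < n
    · have := e_fin n ⟨k, h⟩
      simp only at this
      rw [this]
      exact (Pi.basisFun ℂ (Fin n)).constr_basis ℂ _ _
    · rw [e_zero n k (by omega), map_zero, wbig k (by omega)]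
  have Sv : R α θ 0 v0 = R α θ 0 v1 := by
    funext i
    rcases i with ⟨i, hin⟩
    rcases Nat.lt_or_ge i 2 with h | h
    · rw [S_low α θ hn _ _ (by simp only; omega), S_low α θ hn _ _ (by simp only; omega)]
    rcases Nat.eq_or_lt_of_le h with h | h
    · subst h
      rw [S_two α θ hn, S_two α θ hn, h01 _ (by simp only; omega), h01 _ (by simp only; omega)]
    · obtain ⟨j, rfl⟩ : ∃ j, i = j + 1 := ⟨i - 1, by omega⟩
      rw [S_high α θ hn _ j (by omega) hin, S_high α θ hn _ j (by omega) hin,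
        h01 _ (by simp only; omega)]
  have comm : ∀ x, d (R α θ 0 x) = R α θ 0 (d x) := by
    have : d * R α θ 0 = R α θ 0 * d := by
      refine ext_e fun k hk => ?_
      simp only [Module.End.mul_apply]
      cases k with
      | zero =>
        have h0 : R α θ 0 (e n 0) = e n 2 := S_e0 α θ hn
        rw [h0, hde, hde]
        simp [w, Sv]
      | succ k =>
        have h0 : R α θ 0 (e n (k+1)) = e n (k+1+1) := by
          rw [R_apply]; exact S_e α θ hn (k+1) (by omega)
        rw [h0, hde, hde]
        simp only [w]
        rw [pow_succ', Module.End.mul_apply]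
    intro x
    exact LinearMap.congr_fun this x
  have dlow : ∀ (i : Fin n), i.val ≤ 1 → ∀ x, d x i = 0 := by
    intro i hi x
    have : (LinearMap.proj i : (Fin n → ℂ) →ₗ[ℂ] ℂ) ∘ₗ d = 0 := by
      refine (Pi.basisFun ℂ (Fin n)).ext fun k => ?_
      rw [← e_fin, LinearMap.comp_apply, hde]
      exact wlow _ i hi
    exact LinearMap.congr_fun this x
  have commP : ∀ x, d (R α θ 1 x) = R α θ 1 (d x) := by
    intro x
    rw [P_form α θ hn hα, P_form α θ hn hα, dlow _ (by simp) x]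
    simp only [map_add, map_smul, comm, hde, wbig (n-1) le_rfl]
    simp
  refine ⟨d, ?_, hde 0, ?_⟩
  · intro x y
    rw [mul_formula α θ hn, mul_formula α θ hn, mul_formula α θ hn, dlow _ (by simp) y,
      dlow _ (by simp) y, map_add, map_smul, map_smul, comm, commP]
    simp
  · rw [hde 1]; simp [w]

lemma der_zero (hn : 7 ≤ n) (d : Module.End ℂ (Fin n → ℂ)) (h0 : d (e n 0) = 0)
    (h1 : d (e n 1) = 0) (comm : ∀ x, d (R α θ 0 x) = R α θ 0 (d x)) : d = 0 := by
  have : ∀ k, d (e n (k+1)) = 0 := by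
    intro k
    induction k with
    | zero => exact h1
    | succ k ih =>
      have hh : R α θ 0 (e n (k+1)) = e n (k+1+1) := by
        rw [R_apply]; exact S_e α θ hn (k+1) (by omega)
      rw [← hh, comm, ih, map_zero]
  refine ext_e fun k _ => ?_
  cases k with
  | zero => simpa using h0
  | succ k => simpa using this k

/-- coordinates on the space of derivations -/
noncomputable def coords (hn : 7 ≤ n) : Module.End ℂ (Fin n → ℂ) →ₗ[ℂ] (Fin (n-1) → ℂ) where
  toFun d := fun k => if h : k.val + 2 < n then d (e n 0) ⟨k.val + 2, h⟩
    else d (e n 1) ⟨n-1, by omega⟩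
  map_add' := by
    intro d d'; funext k
    simp only [Pi.add_apply, LinearMap.add_apply]
    split_ifs <;> rfl
  map_smul' := by
    intro c d; funext k
    simp only [Pi.smul_apply, LinearMap.smul_apply, RingHom.id_apply]
    split_ifs <;> rfl

lemma coords_apply (hn : 7 ≤ n) (d : Module.End ℂ (Fin n → ℂ)) (k : Fin (n-1)) :
    coords hn d k = if h : k.val + 2 < n then d (e n 0) ⟨k.val + 2, h⟩
      else d (e n 1) ⟨n-1, by omega⟩ := rfl

end

end FLbAux

open FLbAux

theorem dim_der_FLb_case4 (n : ℕ) (hn : 7 ≤ n) (α : ℕ → ℂ) (θ : ℂ)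
    (hθ : θ ≠ 0) (h4 : α 4 ≠ 0) (h5 : α 5 ≠ 0) (hα : ∀ i, 6 ≤ i → i ≤ n → α i = 0) :
    Module.finrank ℂ (derivations n (structMul n (cFLb n α θ))) = n - 1 := by
  let F := (coords hn).domRestrict (derivations n (structMul n (cFLb n α θ)))
  have hinj : Function.Injective F := by
    rw [injective_iff_map_eq_zero]
    rintro ⟨d, hd⟩ hF
    have hF' : ∀ k, coords hn d k = 0 := fun k => congrFun hF k
    obtain ⟨a0, a1, b0, b1, comm⟩ := key α θ hn hθ h4 h5 hα d hd
    have hd0 : d (e n 0) = 0 := by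
      funext i
      rcases i with ⟨i, hin⟩
      rcases Nat.lt_or_ge i 2 with h | h
      · interval_cases i
        · exact a0
        · exact a1
      · obtain ⟨j, rfl⟩ : ∃ j, i = j + 2 := ⟨i - 2, by omega⟩
        have := hF' ⟨j, by omega⟩
        rw [coords_apply, dif_pos (by simp only; omega)] at this
        exact this
    have hd1 : d (e n 1) = 0 := by
      have hS : R α θ 0 (d (e n 1)) = 0 := by
        have s0 : R α θ 0 (e n 0) = e n 2 := S_e0 α θ hn
        have s1 : R α θ 0 (e n 1) = e n 2 := S_e α θ hn 1 le_rfl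
        rw [← comm, s1, ← s0, comm, hd0, map_zero]
      funext i
      rcases i with ⟨i, hin⟩
      rcases Nat.lt_or_ge i 2 with h | h
      · interval_cases i
        · exact b0
        · exact b1
      by_cases hl : i = n - 1
      · subst hl
        have := hF' ⟨n-2, by omega⟩
        rw [coords_apply, dif_neg (by simp only; omega)] at this
        exact this
      · have := S_high α θ hn (d (e n 1)) i h (by omega)
        rw [← this, hS]; rfl
    have := der_zero α θ hn d hd0 hd1 comm
    subst this
    rfl
  have hsurj : Function.Surjective F := by
    intro f
    let v0 : Fin n → ℂ := fun i => if h : 2 ≤ i.val then f ⟨i.val - 2, by omega⟩ else 0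
    let v1 : Fin n → ℂ := fun i => if i.val = n - 1 then f ⟨n-2, by omega⟩ else v0 i
    obtain ⟨d, hd, e0, e1⟩ := exists_der α θ hn hα v0 v1
      (fun i hi => dif_neg (by omega))
      (fun i hi => by
        simp only [v1, v0]
        rw [if_neg (by omega), dif_neg (by omega)])
      (fun i hi => by
        simp only [v1]
        rw [if_neg (by omega)])
    refine ⟨⟨d, hd⟩, ?_⟩
    funext k
    change coords hn d k = f k
    rw [coords_apply, e0, e1]
    have := k.2
    split_ifs with h
    · simp [v0]
    · simp only [v1, if_true]
      congr 1
      ext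
      simp only
      omega
  have := (LinearEquiv.ofBijective F ⟨hinj, hsurj⟩).finrank_eq
  rw [this]
  simp
end

section
/- Let n ≥ 7 and L = L(α₄,…,αₙ,θ) ∈ FLbₙ. If θ ≠ 0, α₄ = 0, α₅ ≠ 0 and αᵢ = 0 for all 6 ≤ i ≤ n, then dim Der(L) = n − 1. -/
open scoped BigOperators

namespace FLb5

/-- Right multiplication by the first basis vector. -/
noncomputable def R (m : ℕ) : Module.End ℂ (Fin (m+7) → ℂ) where
  toFun x k := if k.val = 2 then x 0 + x 1 else
    if 3 ≤ k.val then x ⟨k.val - 1, by omega⟩ else 0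
  map_add' x y := by
    funext k; simp only [Pi.add_apply]; split_ifs <;> ring
  map_smul' t x := by
    funext k; simp only [Pi.smul_apply, smul_eq_mul, RingHom.id_apply]; split_ifs <;> ring

/-- Right multiplication by the second basis vector. -/
noncomputable def S (m : ℕ) (a θ : ℂ) : Module.End ℂ (Fin (m+7) → ℂ) where
  toFun x k := a * (if k.val = 4 then x 0 + x 1 else
    if 5 ≤ k.val then x ⟨k.val - 3, by omega⟩ else 0) + (if k.val = m + 6 then θ * x 0 else 0)
  map_add' x y := by
    funext k; simp only [Pi.add_apply]; split_ifs <;> ring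
  map_smul' t x := by
    funext k; simp only [Pi.smul_apply, smul_eq_mul, RingHom.id_apply]; split_ifs <;> ring

/-- The map sending the second basis vector to the last one. -/
noncomputable def E (m : ℕ) : Module.End ℂ (Fin (m+7) → ℂ) where
  toFun x k := if k.val = m + 6 then x 1 else 0
  map_add' x y := by
    funext k; simp only [Pi.add_apply]; split_ifs <;> ring
  map_smul' t x := by
    funext k; simp only [Pi.smul_apply, smul_eq_mul, RingHom.id_apply]; split_ifs <;> ring

lemma R_apply (m : ℕ) (x : Fin (m+7) → ℂ) (k : Fin (m+7)) :
    R m x k = if k.val = 2 then x 0 + x 1 else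
    if 3 ≤ k.val then x ⟨k.val - 1, by omega⟩ else 0 := rfl

lemma S_apply (m : ℕ) (a θ : ℂ) (x : Fin (m+7) → ℂ) (k : Fin (m+7)) :
    S m a θ x k = a * (if k.val = 4 then x 0 + x 1 else
    if 5 ≤ k.val then x ⟨k.val - 3, by omega⟩ else 0)
      + (if k.val = m + 6 then θ * x 0 else 0) := rfl

lemma E_apply (m : ℕ) (x : Fin (m+7) → ℂ) (k : Fin (m+7)) :
    E m x k = if k.val = m + 6 then x 1 else 0 := rfl

lemma structMul_single (n : ℕ) (c : Fin n → Fin n → Fin n → ℂ) (i j k : Fin n) :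
    structMul n c (Pi.single i 1) (Pi.single j 1) k = c i j k := by
  simp only [structMul, LinearMap.mk₂_apply]
  rw [Finset.sum_eq_single i, Finset.sum_eq_single j]
  · simp
  · intro b _ hb; simp [hb]
  · simp
  · intro b _ hb; simp [hb]
  · simp

lemma mul_eq (m : ℕ) (α : ℕ → ℂ) (θ : ℂ)
    (h4 : α 4 = 0) (hα : ∀ i, 6 ≤ i → i ≤ m + 7 → α i = 0) (x y : Fin (m+7) → ℂ) :
    structMul (m+7) (cFLb (m+7) α θ) x y = y 0 • R m x + y 1 • S m (α 5) θ x := by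
  let B : (Fin (m+7) → ℂ) →ₗ[ℂ] (Fin (m+7) → ℂ) →ₗ[ℂ] (Fin (m+7) → ℂ) :=
    LinearMap.mk₂ ℂ (fun x y => y 0 • R m x + y 1 • S m (α 5) θ x)
      (by intros; simp only [map_add, smul_add]; abel)
      (by intro c x y; simp only [map_smul, smul_add]; rw [smul_comm, smul_comm (y 1)])
      (by intros; simp only [Pi.add_apply, add_smul]; abel)
      (by intros; simp only [Pi.smul_apply, smul_eq_mul, mul_smul, smul_add])
  suffices h : structMul (m+7) (cFLb (m+7) α θ) = B by rw [h]; rfl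
  apply LinearMap.ext_basis (Pi.basisFun ℂ (Fin (m+7))) (Pi.basisFun ℂ (Fin (m+7)))
  intro i j
  funext k
  simp only [Pi.basisFun_apply]
  rw [structMul_single]
  simp only [B, LinearMap.mk₂_apply, Pi.add_apply, Pi.smul_apply, smul_eq_mul, R_apply, S_apply,
    Pi.single_apply, Fin.ext_iff, Fin.val_zero, Fin.val_one, cFLb]
  have hk := k.2
  have hi := i.2
  rcases Nat.lt_trichotomy j.val 1 with hj | hj | hj
  · have hj0 : j.val = 0 := by omega
    simp only [hj0]
    norm_num [-Fin.val_eq_zero_iff]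
    split_ifs <;> first | omega | (simp; done) | contradiction
  · simp only [hj]
    norm_num [-Fin.val_eq_zero_iff]
    by_cases hi0 : i.val = 0
    · simp only [hi0]
      norm_num [-Fin.val_eq_zero_iff]
      by_cases hk4 : k.val = 4
      · simp only [hk4]
        norm_num [-Fin.val_eq_zero_iff]
        omega
      · have : 3 ≤ k.val ∧ k.val ≤ m + 5 → α (k.val + 1) = 0 := by
          intro h
          by_cases h3 : k.val = 3
          · rw [h3]; exact h4
          · exact hα _ (by omega) (by omega)
        split_ifs <;> first | omega | (rw [this (by omega)]; simp; done) | (simp; done)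
    · by_cases hk3 : k.val = i.val + 3
      · have : k.val - i.val + 2 = 5 := by omega
        simp only [this]
        split_ifs <;> first | omega | (simp; done) | contradiction
      · have : i.val + 2 ≤ k.val → α (k.val - i.val + 2) = 0 := by
          intro h
          by_cases h3 : k.val = i.val + 2
          · rw [h3]; simpa using h4
          · exact hα _ (by omega) (by omega)
        split_ifs <;> first | omega | (rw [this (by omega)]; simp; done) | (simp; done)
  · have j0 : ¬ j.val = 0 := by omega
    have j1 : ¬ j.val = 1 := by omega
    have j0' : ¬ 0 = j.val := by omega
    have j1' : ¬ 1 = j.val := by omega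
    simp only [j0, j1, j0', j1', if_false, zero_mul, add_zero]

lemma S_eq (m : ℕ) (a θ : ℂ) (x : Fin (m+7) → ℂ) :
    S m a θ x = a • R m (R m (R m x)) + (θ * x 0) • Pi.single (Fin.last (m+6)) 1 := by
  funext k
  obtain ⟨k, hk⟩ := k
  rcases k with _ | _ | _ | _ | _ | k <;>
    simp [S_apply, R_apply, Pi.single_apply, Fin.ext_iff]

lemma R_zero (m : ℕ) (x : Fin (m+7) → ℂ) : R m x 0 = 0 := by simp [R_apply]
lemma R_one (m : ℕ) (x : Fin (m+7) → ℂ) : R m x 1 = 0 := by simp [R_apply]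
lemma S_zero (m : ℕ) (a θ : ℂ) (x : Fin (m+7) → ℂ) : S m a θ x 0 = 0 := by simp [S_apply]
lemma S_one (m : ℕ) (a θ : ℂ) (x : Fin (m+7) → ℂ) : S m a θ x 1 = 0 := by simp [S_apply]

lemma R_last (m : ℕ) : R m (Pi.single (Fin.last (m+6)) 1) = 0 := by
  funext k
  simp only [R_apply, Pi.single_apply, Fin.ext_iff, Fin.val_zero, Fin.val_one, Fin.val_last,
    Pi.zero_apply]
  split_ifs <;> first | omega | (simp; done) | contradiction

lemma R_single (m k : ℕ) (hk : k + 3 < m + 7) :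
    R m (Pi.single ⟨k+2, by omega⟩ 1) = Pi.single ⟨k+3, hk⟩ 1 := by
  funext j
  simp only [R_apply, Pi.single_apply, Fin.ext_iff, Fin.val_zero, Fin.val_one]
  split_ifs <;> first | omega | (simp; done) | contradiction

lemma R_single0 (m : ℕ) :
    R m (Pi.single 0 1) = Pi.single ⟨2, by omega⟩ 1 := by
  funext j
  simp only [R_apply, Pi.single_apply, Fin.ext_iff, Fin.val_zero, Fin.val_one]
  split_ifs <;> first | omega | (simp; done) | contradiction

lemma R_single1 (m : ℕ) :
    R m (Pi.single 1 1) = Pi.single ⟨2, by omega⟩ 1 := by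
  funext j
  simp only [R_apply, Pi.single_apply, Fin.ext_iff, Fin.val_zero, Fin.val_one]
  split_ifs <;> first | omega | (simp; done) | contradiction

lemma Rpow0 (m k : ℕ) (hk : k + 2 < m + 7) :
    (R m ^ (k+1)) (Pi.single 0 1) = Pi.single ⟨k+2, hk⟩ 1 := by
  induction k with
  | zero => simpa using R_single0 m
  | succ k ih =>
    rw [pow_succ', Module.End.mul_apply, ih (by omega), R_single m k hk]

lemma Rpow1 (m k : ℕ) (hk : k + 2 < m + 7) :
    (R m ^ (k+1)) (Pi.single 1 1) = Pi.single ⟨k+2, hk⟩ 1 := by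
  rw [← Rpow0 m k hk, pow_succ, Module.End.mul_apply, Module.End.mul_apply, R_single1, R_single0]

lemma mem_iff (m : ℕ) (α : ℕ → ℂ) (θ : ℂ)
    (h4 : α 4 = 0) (hα : ∀ i, 6 ≤ i → i ≤ m + 7 → α i = 0) (d : Module.End ℂ (Fin (m+7) → ℂ)) :
    d ∈ derivations (m+7) (structMul (m+7) (cFLb (m+7) α θ)) ↔
    ∀ x y, y 0 • d (R m x) + y 1 • d (S m (α 5) θ x) =
      y 0 • R m (d x) + y 1 • S m (α 5) θ (d x) + (d y 0 • R m x + d y 1 • S m (α 5) θ x) := by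
  change (∀ x y, _) ↔ _
  simp only [mul_eq m α θ h4 hα, map_add, map_smul]

/-- A derivation is a map commuting with `R`, with image having two vanishing coordinates. -/
lemma nec (m : ℕ) (a θ : ℂ) (ha : a ≠ 0) (d : Module.End ℂ (Fin (m+7) → ℂ))
    (h : ∀ x y, y 0 • d (R m x) + y 1 • d (S m a θ x) =
      y 0 • R m (d x) + y 1 • S m a θ (d x) + (d y 0 • R m x + d y 1 • S m a θ x)) :
    (∀ x, d (R m x) = R m (d x)) ∧ d (Pi.single 0 1) 0 = 0 ∧ d (Pi.single 0 1) 1 = 0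
      ∧ d (Pi.single 1 1) 0 = 0 ∧ d (Pi.single 1 1) 1 = 0 := by
  obtain ⟨e0, he0⟩ : ∃ e : Fin (m+7) → ℂ, e = Pi.single 0 1 := ⟨_, rfl⟩
  obtain ⟨e1, he1⟩ : ∃ e : Fin (m+7) → ℂ, e = Pi.single 1 1 := ⟨_, rfl⟩
  obtain ⟨w, hw⟩ : ∃ e : Fin (m+7) → ℂ, e = Pi.single (Fin.last (m+6)) 1 := ⟨_, rfl⟩
  have h0 : ∀ x, d (R m x) = R m (d x) + (d e0 0 • R m x + d e0 1 • S m a θ x) := by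
    intro x; simpa [he0] using h x e0
  have h1 : ∀ x, d (S m a θ x) = S m a θ (d x) + (d e1 0 • R m x + d e1 1 • S m a θ x) := by
    intro x; simpa [he1] using h x e1
  rw [← he0, ← he1]
  have E01 : R m e0 = R m e1 := by rw [he0, he1, R_single0, R_single1]
  obtain ⟨e2, he2⟩ : ∃ e, e = R m e1 := ⟨_, rfl⟩
  obtain ⟨e3, he3⟩ : ∃ e, e = R m e2 := ⟨_, rfl⟩
  obtain ⟨e4, he4⟩ : ∃ e, e = R m e3 := ⟨_, rfl⟩
  have v2 : e2 = Pi.single ⟨2, by omega⟩ 1 := by rw [he2, he1, R_single1]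
  have v3 : e3 = Pi.single ⟨3, by omega⟩ 1 := by rw [he3, v2]; exact R_single m 0 (by omega)
  have v4 : e4 = Pi.single ⟨4, by omega⟩ 1 := by rw [he4, v3]; exact R_single m 1 (by omega)
  have s1 : S m a θ e1 = a • e4 := by
    rw [S_eq, ← he2, ← he3, ← he4, he1]; simp
  have s2 : S m a θ e2 = a • R m e4 := by
    rw [S_eq, ← he3, ← he4, v2]; simp [Fin.ext_iff]
  have s3 : S m a θ e3 = a • R m (R m e4) := by
    rw [S_eq, ← he4, v3]; simp [Fin.ext_iff]
  have v5 : R m e4 = Pi.single ⟨5, by omega⟩ 1 := by rw [v4]; exact R_single m 2 (by omega)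
  have v6 : R m (R m e4) = Pi.single ⟨6, by omega⟩ 1 := by rw [v5]; exact R_single m 3 (by omega)
  have s0 : S m a θ e0 = a • e4 + θ • w := by
    rw [S_eq, E01, ← he2, ← he3, ← he4, he0, hw]; simp
  have a0 := h0 e0
  have a1 := h0 e1
  have a2 := h0 e2
  have a3 := h0 e3
  have b1 := h1 e1
  rw [E01, ← he2, s0] at a0
  rw [← he2, s1] at a1
  rw [← he3, s2, v5] at a2
  rw [← he4, s3, v6] at a3
  rw [s1, map_smul, ← he2] at b1
  have r3 : ∀ (x : Fin (m+7) → ℂ) (k : ℕ) (hk : k + 3 < m + 7),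
      R m x ⟨k+3, hk⟩ = x ⟨k+2, by omega⟩ := by
    intro x k hk; simp [R_apply]
  have p0 : d e3 0 = 0 := by rw [a2]; simp [R_zero, v3, Fin.ext_iff]
  have p1 : d e3 1 = 0 := by rw [a2]; simp [R_one, v3, Fin.ext_iff]
  have q02 := congrFun a0 ⟨2, by omega⟩
  have q12 := congrFun a1 ⟨2, by omega⟩
  have q14 := congrFun a1 ⟨4, by omega⟩
  have q23 := congrFun a2 ⟨3, by omega⟩
  have q25 := congrFun a2 ⟨5, by omega⟩
  have q32 := congrFun a3 ⟨2, by omega⟩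
  have q34 := congrFun a3 ⟨4, by omega⟩
  have q36 := congrFun a3 ⟨6, by omega⟩
  have f2 := congrFun b1 ⟨2, by omega⟩
  have f4 := congrFun b1 ⟨4, by omega⟩
  have f6 := congrFun b1 ⟨6, by omega⟩
  simp [R_apply, S_apply, v2, v3, v4, hw, Pi.single_apply, Fin.ext_iff] at q02 q12 q14 q23 q25 q32 q34 q36 f2 f4 f6
  rw [v3] at p0 p1
  rw [p0, p1, add_zero] at q32
  have C0 : d e1 0 = 0 := by rw [← f2, q32, mul_zero]
  have B0 : d e0 1 = 0 := by
    rw [C0, q36, q25, q14] at f6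
    have h3 : a * a * (3 * d e0 1) = 0 := by
      simp only [mul_zero, ite_self, add_zero] at f6
      linear_combination f6
    simpa [ha] using h3
  have D3 : d e1 1 = 3 * d e0 0 := by
    have h3 : a * (d e1 1 - 3 * d e0 0) = 0 := by
      rw [q34, q23, q12] at f4
      linear_combination (-1) * f4 - a * 0 * C0
    rcases mul_eq_zero.mp h3 with h | h
    · exact absurd h ha
    · linear_combination h
  have A0 : d e0 0 = 0 := by
    have : 2 * d e0 0 = 0 := by linear_combination q02 - q12 - D3 + B0 - C0
    simpa using this
  refine ⟨?_, A0, B0, C0, by rw [D3, A0, mul_zero]⟩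
  intro x
  rw [h0 x, A0, B0]; simp

/-- Parametrization of the derivations. -/
noncomputable def Psi (m : ℕ) :
    ((Fin (m+5) → ℂ) × ℂ) →ₗ[ℂ] Module.End ℂ (Fin (m+7) → ℂ) where
  toFun p := ∑ i, p.1 i • R m ^ (i.val + 1) + p.2 • E m
  map_add' p q := by
    simp only [Prod.fst_add, Prod.snd_add, Pi.add_apply, add_smul, Finset.sum_add_distrib]
    abel
  map_smul' t p := by
    simp only [Prod.smul_fst, Prod.smul_snd, Pi.smul_apply, smul_eq_mul, mul_smul, smul_add,
      Finset.smul_sum, RingHom.id_apply]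

lemma Psi_apply (m : ℕ) (p : (Fin (m+5) → ℂ) × ℂ) :
    Psi m p = ∑ i, p.1 i • R m ^ (i.val + 1) + p.2 • E m := rfl

lemma E_single0 (m : ℕ) : E m (Pi.single 0 1) = 0 := by
  funext k; simp [E_apply]

lemma E_single1 (m : ℕ) : E m (Pi.single 1 1) = Pi.single (Fin.last (m+6)) 1 := by
  funext k; simp [E_apply, Pi.single_apply, Fin.ext_iff]

lemma E_eq (m : ℕ) (x : Fin (m+7) → ℂ) : E m x = x 1 • Pi.single (Fin.last (m+6)) 1 := by
  funext k; simp [E_apply, Pi.single_apply, Fin.ext_iff]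

lemma sum_single (m : ℕ) (p : Fin (m+5) → ℂ) (j : Fin (m+5)) :
    (∑ i : Fin (m+5), p i • (Pi.single ⟨i.val+2, by omega⟩ 1 : Fin (m+7) → ℂ))
      ⟨j.val+2, by omega⟩ = p j := by
  rw [Finset.sum_apply, Finset.sum_eq_single j]
  · simp
  · intro b _ hb
    have : b.val ≠ j.val := fun h => hb (Fin.ext h)
    simp [Pi.single_apply, Fin.ext_iff, this.symm]
  · simp

lemma Psi_single0 (m : ℕ) (p : (Fin (m+5) → ℂ) × ℂ) :
    Psi m p (Pi.single 0 1) =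
      ∑ i : Fin (m+5), p.1 i • (Pi.single ⟨i.val+2, by omega⟩ 1 : Fin (m+7) → ℂ) := by
  rw [Psi_apply]
  simp only [LinearMap.add_apply, LinearMap.smul_apply, LinearMap.sum_apply, E_single0,
    smul_zero, add_zero]
  refine Finset.sum_congr rfl fun i _ => ?_
  rw [Rpow0]

lemma Psi_single1 (m : ℕ) (p : (Fin (m+5) → ℂ) × ℂ) :
    Psi m p (Pi.single 1 1) =
      Psi m p (Pi.single 0 1) + p.2 • Pi.single (Fin.last (m+6)) 1 := by
  rw [Psi_single0, Psi_apply]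
  simp only [LinearMap.add_apply, LinearMap.smul_apply, LinearMap.sum_apply, E_single1]
  congr 1
  refine Finset.sum_congr rfl fun i _ => ?_
  rw [Rpow1]

lemma Psi_inj (m : ℕ) : Function.Injective (Psi m) := by
  rw [← LinearMap.ker_eq_bot, LinearMap.ker_eq_bot']
  intro p hp
  have h0 := Psi_single0 m p
  have h1 := Psi_single1 m p
  rw [hp] at h0 h1
  refine Prod.ext ?_ ?_
  · funext j
    rw [← sum_single m p.1 j, ← h0]; rfl
  · have := congrFun h1 (Fin.last (m+6))
    simpa using this.symm

lemma R_comm_mem (m : ℕ) (a θ : ℂ) (d : Module.End ℂ (Fin (m+7) → ℂ))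
    (hR : ∀ x, d (R m x) = R m (d x)) (hS : ∀ x, d (S m a θ x) = S m a θ (d x))
    (hd0 : ∀ x, d x 0 = 0) (hd1 : ∀ x, d x 1 = 0) (x y : Fin (m+7) → ℂ) :
    y 0 • d (R m x) + y 1 • d (S m a θ x) =
      y 0 • R m (d x) + y 1 • S m a θ (d x) + (d y 0 • R m x + d y 1 • S m a θ x) := by
  rw [hR, hS, hd0, hd1]; simp

lemma Rpow_comm (m k : ℕ) (x : Fin (m+7) → ℂ) : (R m ^ k) (R m x) = R m ((R m ^ k) x) := by
  rw [← Module.End.mul_apply, ← Module.End.mul_apply, ← pow_succ, ← pow_succ']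

lemma range_eq (m : ℕ) (α : ℕ → ℂ) (θ : ℂ) (h4 : α 4 = 0) (h5 : α 5 ≠ 0)
    (hα : ∀ i, 6 ≤ i → i ≤ m + 7 → α i = 0) :
    derivations (m+7) (structMul (m+7) (cFLb (m+7) α θ)) = LinearMap.range (Psi m) := by
  apply le_antisymm
  · intro d hd
    rw [mem_iff m α θ h4 hα] at hd
    obtain ⟨hR, A0, B0, C0, D0⟩ := nec m (α 5) θ h5 d hd
    let p : (Fin (m+5) → ℂ) × ℂ := (fun i => d (Pi.single 0 1) ⟨i.val+2, by omega⟩,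
      d (Pi.single 1 1) (Fin.last (m+6)) - d (Pi.single 0 1) (Fin.last (m+6)))
    have e0 : Psi m p (Pi.single 0 1) = d (Pi.single 0 1) := by
      rw [Psi_single0]
      funext k
      obtain ⟨k, hk⟩ := k
      rcases k with _ | _ | k
      · refine Eq.trans ?_ A0.symm
        rw [Finset.sum_apply]
        refine Finset.sum_eq_zero fun i _ => ?_
        rw [Pi.smul_apply, Pi.single_apply, if_neg (by rw [Fin.ext_iff]; dsimp only; omega),
          smul_zero]
      · refine Eq.trans ?_ B0.symm
        rw [Finset.sum_apply]
        refine Finset.sum_eq_zero fun i _ => ?_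
        rw [Pi.smul_apply, Pi.single_apply, if_neg (by rw [Fin.ext_iff]; dsimp only; omega),
          smul_zero]
      · exact sum_single m p.1 ⟨k, by omega⟩
    have key : R m (d (Pi.single 0 1)) = R m (d (Pi.single 1 1)) := by
      rw [← hR, ← hR, R_single0, R_single1]
    refine ⟨p, ?_⟩
    apply (Pi.basisFun ℂ (Fin (m+7))).ext
    intro i
    rw [Pi.basisFun_apply]
    obtain ⟨i, hi⟩ := i
    rcases i with _ | _ | i
    · exact e0
    · change Psi m p (Pi.single 1 1) = d (Pi.single 1 1)
      rw [Psi_single1, e0]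
      funext k
      by_cases hk : k = Fin.last (m+6)
      · subst hk; simp [p]
      · have hk' : k.val < m + 6 := by
          have := k.2
          have : k.val ≠ m + 6 := fun h => hk (Fin.ext h)
          omega
        simp only [Pi.add_apply, Pi.smul_apply, Pi.single_apply, hk, if_false, smul_zero, add_zero]
        obtain ⟨k, hk2⟩ := k
        rcases k with _ | _ | k
        · exact A0.trans C0.symm
        · exact B0.trans D0.symm
        · have := congrFun key ⟨k+3, by simpa using hk'⟩
          simpa [R_apply] using this
    · rw [← Rpow0 m i hi]
      have cd : ∀ j x, d ((R m ^ j) x) = (R m ^ j) (d x) := by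
        intro j x
        induction j with
        | zero => simp
        | succ j ih => rw [pow_succ', Module.End.mul_apply, Module.End.mul_apply, hR, ih]
      have ER : ∀ x, E m (R m x) = 0 := fun x => by rw [E_eq, R_one, zero_smul]
      have RE : ∀ x, R m (E m x) = 0 := fun x => by rw [E_eq, map_smul, R_last, smul_zero]
      have cp : ∀ j x, Psi m p ((R m ^ j) x) = (R m ^ j) (Psi m p x) := by
        have c1 : ∀ x, Psi m p (R m x) = R m (Psi m p x) := by
          intro x
          simp only [Psi_apply, LinearMap.add_apply, LinearMap.smul_apply, LinearMap.sum_apply,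
            map_add, map_sum, map_smul, ER, RE, Rpow_comm]
        intro j x
        induction j with
        | zero => simp
        | succ j ih => rw [pow_succ', Module.End.mul_apply, Module.End.mul_apply, c1, ih]
      rw [cd, cp, e0]
  · rintro _ ⟨p, rfl⟩
    rw [Psi_apply]
    refine Submodule.add_mem _ (Submodule.sum_mem _ fun i _ => Submodule.smul_mem _ _ ?_)
      (Submodule.smul_mem _ _ ?_)
    · rw [mem_iff m α θ h4 hα]
      have z0 : ∀ x, (R m ^ (i.val+1)) x 0 = 0 := fun x => by
        rw [pow_succ', Module.End.mul_apply, R_zero]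
      have z1 : ∀ x, (R m ^ (i.val+1)) x 1 = 0 := fun x => by
        rw [pow_succ', Module.End.mul_apply, R_one]
      have zl : (R m ^ (i.val+1)) (Pi.single (Fin.last (m+6)) 1) = 0 := by
        rw [pow_succ, Module.End.mul_apply, R_last, map_zero]
      refine R_comm_mem m _ θ _ (Rpow_comm m _) ?_ z0 z1
      intro x
      rw [S_eq, S_eq, z0, map_add, map_smul, map_smul, zl, Rpow_comm, Rpow_comm, Rpow_comm]
      simp
    · rw [mem_iff m α θ h4 hα]
      have ER : ∀ x, E m (R m x) = 0 := fun x => by rw [E_eq, R_one, zero_smul]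
      have RE : ∀ x, R m (E m x) = 0 := fun x => by rw [E_eq, map_smul, R_last, smul_zero]
      have E0 : ∀ x, E m x 0 = 0 := fun x => by simp [E_apply]
      have E1 : ∀ x, E m x 1 = 0 := fun x => by simp [E_apply]
      refine R_comm_mem m _ θ _ (fun x => by rw [ER, RE]) ?_ E0 E1
      intro x
      rw [S_eq m _ _ (E m x), E0, RE, E_eq, S_one]
      simp

end FLb5

open FLb5 in
theorem dim_der_FLb_case5 (n : ℕ) (hn : 7 ≤ n) (α : ℕ → ℂ) (θ : ℂ)
    (hθ : θ ≠ 0) (h4 : α 4 = 0) (h5 : α 5 ≠ 0) (hα : ∀ i, 6 ≤ i → i ≤ n → α i = 0) :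
    Module.finrank ℂ (derivations n (structMul n (cFLb n α θ))) = n - 1 := by
  obtain ⟨m, rfl⟩ : ∃ m, n = m + 7 := ⟨n - 7, by omega⟩
  rw [range_eq m α θ h4 h5 hα, LinearMap.finrank_range_of_inj (Psi_inj m)]
  simp
end

section
/- Let n ≥ 5 and L = L(α₄,…,αₙ,θ) ∈ FLbₙ. If θ = 0 and αᵢ = 0 for all 4 ≤ i ≤ n, then dim Der(L) = n + 1. -/
open scoped BigOperators

namespace FLbAux

/-- right multiplication by the first basis vector -/
noncomputable def S (n : ℕ) (hn : 5 ≤ n) : Module.End ℂ (Fin n → ℂ) where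
  toFun x k := if k.val ≤ 1 then 0 else if k.val = 2 then x ⟨0, by omega⟩ + x ⟨1, by omega⟩
    else x ⟨k.val - 1, by omega⟩
  map_add' x y := by
    funext k; simp only [Pi.add_apply]; split_ifs <;> ring
  map_smul' a x := by
    funext k; simp only [Pi.smul_apply, smul_eq_mul, RingHom.id_apply]; split_ifs <;> ring

noncomputable def E (n : ℕ) (hn : 5 ≤ n) : Module.End ℂ (Fin n → ℂ) where
  toFun x k := if k.val = 0 then 0 else if k.val = 1 then x ⟨0, by omega⟩ + x ⟨1, by omega⟩
    else x k
  map_add' x y := by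
    funext k; simp only [Pi.add_apply]; split_ifs <;> ring
  map_smul' a x := by
    funext k; simp only [Pi.smul_apply, smul_eq_mul, RingHom.id_apply]; split_ifs <;> ring

noncomputable def D (n : ℕ) : Module.End ℂ (Fin n → ℂ) where
  toFun x k := if k.val = 0 then x k else (k.val : ℂ) * x k
  map_add' x y := by
    funext k; simp only [Pi.add_apply]; split_ifs <;> ring
  map_smul' a x := by
    funext k; simp only [Pi.smul_apply, smul_eq_mul, RingHom.id_apply]; split_ifs <;> ring

noncomputable def F (n : ℕ) (hn : 5 ≤ n) : Module.End ℂ (Fin n → ℂ) where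
  toFun x k := if k.val = n - 1 then x ⟨1, by omega⟩ else 0
  map_add' x y := by
    funext k; simp only [Pi.add_apply]; split_ifs <;> ring
  map_smul' a x := by
    funext k; simp only [Pi.smul_apply, smul_eq_mul, RingHom.id_apply]; split_ifs <;> ring

lemma S_apply (n : ℕ) (hn : 5 ≤ n) (x : Fin n → ℂ) (k : Fin n) : S n hn x k =
    if k.val ≤ 1 then 0 else if k.val = 2 then x ⟨0, by omega⟩ + x ⟨1, by omega⟩
    else x ⟨k.val - 1, by omega⟩ := rfl
lemma E_apply (n : ℕ) (hn : 5 ≤ n) (x : Fin n → ℂ) (k : Fin n) : E n hn x k =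
    if k.val = 0 then 0 else if k.val = 1 then x ⟨0, by omega⟩ + x ⟨1, by omega⟩
    else x k := rfl
lemma D_apply (n : ℕ) (x : Fin n → ℂ) (k : Fin n) : D n x k =
    if k.val = 0 then x k else (k.val : ℂ) * x k := rfl
lemma F_apply (n : ℕ) (hn : 5 ≤ n) (x : Fin n → ℂ) (k : Fin n) : F n hn x k =
    if k.val = n - 1 then x ⟨1, by omega⟩ else 0 := rfl

lemma c_eq (n : ℕ) (hn : 5 ≤ n) (α : ℕ → ℂ) (θ : ℂ)
    (hθ : θ = 0) (hα : ∀ i, 4 ≤ i → i ≤ n → α i = 0) (i j k : Fin n) :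
    cFLb n α θ i j k = if j = ⟨0, by omega⟩ then S n hn (Pi.single i 1) k else 0 := by
  have hi := i.2
  have hj := j.2
  have hk := k.2
  unfold cFLb
  rw [S_apply]
  simp only [Fin.ext_iff, Pi.single_apply]
  by_cases h0 : j.val = 0
  · simp only [h0, if_true]
    split_ifs <;> first | omega | contradiction | simp
  · simp only [h0, if_false]
    split_ifs <;> first | rfl | exact hθ | (apply hα <;> omega)

lemma mul_eq (n : ℕ) (hn : 5 ≤ n) (α : ℕ → ℂ) (θ : ℂ)
    (hθ : θ = 0) (hα : ∀ i, 4 ≤ i → i ≤ n → α i = 0) (x y : Fin n → ℂ) :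
    structMul n (cFLb n α θ) x y = y ⟨0, by omega⟩ • S n hn x := by
  funext k
  have hx : S n hn x = ∑ i, x i • S n hn (Pi.single i 1) := by
    conv_lhs => rw [pi_eq_sum_univ' x]
    simp only [map_sum, map_smul]
  rw [hx]
  simp only [structMul, LinearMap.mk₂_apply, c_eq n hn α θ hθ hα, mul_ite, mul_zero,
    Finset.sum_ite_eq', Finset.mem_univ, if_true, Pi.smul_apply, Finset.sum_apply,
    smul_eq_mul, Finset.mul_sum]
  exact Finset.sum_congr rfl fun i _ => by ring

lemma mem_der (n : ℕ) (hn : 5 ≤ n) (α : ℕ → ℂ) (θ : ℂ)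
    (hθ : θ = 0) (hα : ∀ i, 4 ≤ i → i ≤ n → α i = 0) (d : Module.End ℂ (Fin n → ℂ)) :
    d ∈ derivations n (structMul n (cFLb n α θ)) ↔
    ∀ x y : Fin n → ℂ, y ⟨0, by omega⟩ • d (S n hn x) =
      y ⟨0, by omega⟩ • S n hn (d x) + d y ⟨0, by omega⟩ • S n hn x := by
  change (∀ x y, _ = _) ↔ _
  simp only [mul_eq n hn α θ hθ hα, map_smul]

lemma S_pow_e0 (n : ℕ) (hn : 5 ≤ n) (j : ℕ) (k : Fin n) :
    (S n hn ^ (j+1)) (Pi.single ⟨0, by omega⟩ 1) k = if k.val = j + 2 then 1 else 0 := by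
  induction j generalizing k with
  | zero =>
    simp only [zero_add, pow_one, S_apply, Pi.single_apply, Fin.ext_iff]
    split_ifs <;> first | omega | contradiction | simp
  | succ j ih =>
    rw [pow_succ', Module.End.mul_apply, S_apply, ih, ih, ih]
    simp only
    split_ifs <;> first | omega | contradiction | simp

lemma mem_of_comm (n : ℕ) (hn : 5 ≤ n) (α : ℕ → ℂ) (θ : ℂ)
    (hθ : θ = 0) (hα : ∀ i, 4 ≤ i → i ≤ n → α i = 0) (d : Module.End ℂ (Fin n → ℂ))
    (h1 : ∀ x, d (S n hn x) = S n hn (d x)) (h2 : ∀ x, d x ⟨0, by omega⟩ = 0) :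
    d ∈ derivations n (structMul n (cFLb n α θ)) := by
  rw [mem_der n hn α θ hθ hα]
  intro x y
  rw [h1, h2]; simp

lemma S_mem (n : ℕ) (hn : 5 ≤ n) (α : ℕ → ℂ) (θ : ℂ)
    (hθ : θ = 0) (hα : ∀ i, 4 ≤ i → i ≤ n → α i = 0) (j : ℕ) :
    S n hn ^ (j+1) ∈ derivations n (structMul n (cFLb n α θ)) := by
  apply mem_of_comm n hn α θ hθ hα
  · intro x
    rw [← Module.End.mul_apply, ← Module.End.mul_apply, ← pow_succ, ← pow_succ']
  · intro x
    rw [pow_succ', Module.End.mul_apply, S_apply]; simp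

lemma E_mem (n : ℕ) (hn : 5 ≤ n) (α : ℕ → ℂ) (θ : ℂ)
    (hθ : θ = 0) (hα : ∀ i, 4 ≤ i → i ≤ n → α i = 0) :
    E n hn ∈ derivations n (structMul n (cFLb n α θ)) := by
  apply mem_of_comm n hn α θ hθ hα
  · intro x
    funext k
    simp only [S_apply, E_apply]
    split_ifs <;> first | omega | contradiction | simp
  · intro x
    simp [E_apply]

lemma F_mem (n : ℕ) (hn : 5 ≤ n) (α : ℕ → ℂ) (θ : ℂ)
    (hθ : θ = 0) (hα : ∀ i, 4 ≤ i → i ≤ n → α i = 0) :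
    F n hn ∈ derivations n (structMul n (cFLb n α θ)) := by
  apply mem_of_comm n hn α θ hθ hα
  · intro x
    funext k
    have := k.2
    simp only [S_apply, F_apply]
    split_ifs <;> first | omega | contradiction | simp
  · intro x
    rw [F_apply, if_neg (by simp only; omega)]

lemma D_mem (n : ℕ) (hn : 5 ≤ n) (α : ℕ → ℂ) (θ : ℂ)
    (hθ : θ = 0) (hα : ∀ i, 4 ≤ i → i ≤ n → α i = 0) :
    D n ∈ derivations n (structMul n (cFLb n α θ)) := by
  rw [mem_der n hn α θ hθ hα]
  intro x y
  have h1 : D n (S n hn x) = S n hn (D n x) + S n hn x := by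
    funext k
    rw [Pi.add_apply]
    simp only [S_apply, D_apply]
    split_ifs <;> first | omega | contradiction | simp | skip
    · rw [show k.val = 2 by assumption]; push_cast; ring
    · rw [Nat.cast_sub (by omega)]; push_cast; ring
  have h2 : D n y ⟨0, by omega⟩ = y ⟨0, by omega⟩ := by simp [D_apply]
  rw [h1, h2, smul_add]

/-- the values that determine a derivation -/
noncomputable def Φ (n : ℕ) (hn : 5 ≤ n) : Module.End ℂ (Fin n → ℂ) →ₗ[ℂ] (Fin n → ℂ) × ℂ where
  toFun d := (d (Pi.single ⟨0, by omega⟩ 1), d (Pi.single ⟨1, by omega⟩ 1) ⟨n-1, by omega⟩)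
  map_add' _ _ := rfl
  map_smul' _ _ := rfl

lemma S_e_s10 (n : ℕ) (hn : 5 ≤ n) (i : ℕ) (h1 : 1 ≤ i) (hi : i + 1 < n) :
    S n hn (Pi.single ⟨i, by omega⟩ 1) = Pi.single ⟨i+1, hi⟩ 1 := by
  funext k
  simp only [S_apply, Pi.single_apply, Fin.ext_iff]
  split_ifs <;> first | omega | contradiction | simp

lemma S_e0_s10 (n : ℕ) (hn : 5 ≤ n) :
    S n hn (Pi.single ⟨0, by omega⟩ 1) = Pi.single ⟨2, by omega⟩ 1 := by
  funext k
  simp only [S_apply, Pi.single_apply, Fin.ext_iff]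
  split_ifs <;> first | omega | contradiction | simp

lemma inj (n : ℕ) (hn : 5 ≤ n) (α : ℕ → ℂ) (θ : ℂ)
    (hθ : θ = 0) (hα : ∀ i, 4 ≤ i → i ≤ n → α i = 0) (d : Module.End ℂ (Fin n → ℂ))
    (hd : d ∈ derivations n (structMul n (cFLb n α θ))) (h0 : Φ n hn d = 0) : d = 0 := by
  rw [mem_der n hn α θ hθ hα] at hd
  have he0 : d (Pi.single ⟨0, by omega⟩ 1) = 0 := congrArg Prod.fst h0
  have he1 : d (Pi.single ⟨1, by omega⟩ 1) ⟨n-1, by omega⟩ = 0 := congrArg Prod.snd h0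
  have hc : ∀ x, d (S n hn x) = S n hn (d x) := by
    intro x
    have := hd x (Pi.single ⟨0, by omega⟩ 1)
    simpa [he0] using this
  have h2 : ∀ j, ∀ h : j + 2 < n, d (Pi.single ⟨j+2, h⟩ 1) = 0 := by
    intro j
    induction j with
    | zero => intro h; rw [← S_e0_s10 n hn, hc, he0, map_zero]
    | succ j ih =>
      intro h
      have := S_e_s10 n hn (j+2) (by omega) (by omega)
      rw [show (⟨j+1+2, h⟩ : Fin n) = ⟨j+2+1, by omega⟩ from rfl, ← this, hc,
        ih (by omega), map_zero]
  have h3 : d (Pi.single ⟨1, by omega⟩ 1) = 0 := by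
    have ha : d (Pi.single ⟨1, by omega⟩ 1) ⟨0, by omega⟩ = 0 := by
      have := hd (Pi.single ⟨0, by omega⟩ 1) (Pi.single ⟨1, by omega⟩ 1)
      rw [S_e0_s10] at this
      have := congrFun this ⟨2, by omega⟩
      simpa using this.symm
    have hs : S n hn (d (Pi.single ⟨1, by omega⟩ 1)) = 0 := by
      rw [← hc, S_e_s10 n hn 1 le_rfl (by omega)]
      exact h2 0 (by omega)
    funext k
    obtain ⟨k, hk⟩ := k
    rcases Nat.lt_or_ge k 1 with h | h
    · obtain rfl : k = 0 := by omega
      exact ha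
    rcases Nat.lt_or_ge k (n-1) with h' | h'
    · have := congrFun hs ⟨k+1, by omega⟩
      rw [S_apply] at this
      simp only at this
      rw [if_neg (by omega)] at this
      split_ifs at this with h4
      · obtain rfl : k = 1 := by omega
        rw [ha, zero_add] at this
        exact this
      · exact this
    · obtain rfl : k = n - 1 := by omega
      exact he1
  refine LinearMap.pi_ext' fun i => LinearMap.ext_ring ?_
  obtain ⟨i, hi⟩ := i
  change d (Pi.single _ 1) = 0
  rcases i with _ | _ | i
  · exact he0
  · exact h3
  · exact h2 i hi

lemma surj (n : ℕ) (hn : 5 ≤ n) (α : ℕ → ℂ) (θ : ℂ)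
    (hθ : θ = 0) (hα : ∀ i, 4 ≤ i → i ≤ n → α i = 0) (c : Fin n → ℂ) (b : ℂ) :
    ∃ d ∈ derivations n (structMul n (cFLb n α θ)), Φ n hn d = (c, b) := by
  obtain ⟨d₀, hd, h0⟩ : ∃ d ∈ derivations n (structMul n (cFLb n α θ)),
      d (Pi.single ⟨0, by omega⟩ 1) = c := by
    refine ⟨c ⟨0, by omega⟩ • D n + c ⟨1, by omega⟩ • E n hn +
      ∑ j : Fin n, (if 2 ≤ j.val then c j else 0) • S n hn ^ (j.val - 2 + 1), ?_, ?_⟩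
    · exact add_mem (add_mem (Submodule.smul_mem _ _ (D_mem n hn α θ hθ hα))
        (Submodule.smul_mem _ _ (E_mem n hn α θ hθ hα)))
        (Submodule.sum_mem _ fun j _ => Submodule.smul_mem _ _ (S_mem n hn α θ hθ hα _))
    · funext k
      simp only [LinearMap.add_apply, LinearMap.smul_apply, LinearMap.sum_apply, Pi.add_apply,
        Pi.smul_apply, Finset.sum_apply, S_pow_e0, smul_eq_mul]
      have hs : ∑ j : Fin n, (if 2 ≤ j.val then c j else 0) *
          (if k.val = j.val - 2 + 2 then (1:ℂ) else 0) = if 2 ≤ k.val then c k else 0 := by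
        rw [Finset.sum_eq_single k]
        · split_ifs <;> first | omega | contradiction | simp
        · intro j _ hj
          have : j.val ≠ k.val := fun h => hj (Fin.ext h)
          split_ifs <;> first | omega | contradiction | simp
        · simp
      rw [hs, D_apply, E_apply]
      obtain ⟨k, hk⟩ := k
      rcases k with _ | _ | k <;> simp [Pi.single_apply, Fin.ext_iff]
  refine ⟨d₀ + (b - d₀ (Pi.single ⟨1, by omega⟩ 1) ⟨n-1, by omega⟩) • F n hn,
    add_mem hd (Submodule.smul_mem _ _ (F_mem n hn α θ hθ hα)), ?_⟩
  refine Prod.ext ?_ ?_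
  · change d₀ _ + (_ : ℂ) • F n hn _ = c
    have : F n hn (Pi.single ⟨0, by omega⟩ 1) = 0 := by
      funext k; simp [F_apply, Pi.single_apply, Fin.ext_iff]
    rw [this, h0, smul_zero, add_zero]
  · change d₀ _ _ + _ * F n hn _ _ = b
    rw [F_apply]
    simp

end FLbAux

theorem dim_der_FLb_case6 (n : ℕ) (hn : 5 ≤ n) (α : ℕ → ℂ) (θ : ℂ)
    (hθ : θ = 0) (hα : ∀ i, 4 ≤ i → i ≤ n → α i = 0) :
    Module.finrank ℂ (derivations n (structMul n (cFLb n α θ))) = n + 1 := by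
  have e := LinearEquiv.ofBijective
    ((FLbAux.Φ n hn).domRestrict (derivations n (structMul n (cFLb n α θ)))) ⟨by
      rw [injective_iff_map_eq_zero]
      rintro ⟨d, hd⟩ h
      exact Subtype.ext (FLbAux.inj n hn α θ hθ hα d hd h), by
      rintro ⟨c, b⟩
      obtain ⟨d, hd, h⟩ := FLbAux.surj n hn α θ hθ hα c b
      exact ⟨⟨d, hd⟩, h⟩⟩
  rw [e.finrank_eq]
  simp
end

section
/- For every n ≥ 5 and every choice of parameters β₃, …, β_{n−1}, γ ∈ ℂ, the algebra L = L(β₃,…,β_{n−1},γ) of the second class SLbₙ satisfies n − 1 ≤ dim Der(L) ≤ n + 2. -/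
open scoped BigOperators

/-- Structure constants of `L(β₃,…,β_{n-1},γ) ∈ SLbₙ`:
`[e₁,e₁] = e₃`; `[eᵢ,e₁] = e_{i+1}` for `3 ≤ i ≤ n-1`;
`[e₁,e₂] = β₃e₄ + ⋯ + β_{n-1}eₙ`; `[e₂,e₂] = γeₙ`;
`[eⱼ,e₂] = β₃e_{j+2} + ⋯ + β_{n+1-j}eₙ` for `3 ≤ j ≤ n-2`. -/
noncomputable def cSLb (n : ℕ) (β : ℕ → ℂ) (γ : ℂ) : Fin n → Fin n → Fin n → ℂ :=
  fun i j k =>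
  if j.val = 0 then
    (if i.val = 0 ∧ k.val = 2 then 1
     else if 2 ≤ i.val ∧ i.val ≤ n - 2 ∧ k.val = i.val + 1 then 1
     else 0)
  else if j.val = 1 then
    (if i.val = 0 ∧ 3 ≤ k.val then β k.val
     else if i.val = 1 ∧ k.val = n - 1 then γ
     else if 2 ≤ i.val ∧ i.val ≤ n - 3 ∧ i.val + 2 ≤ k.val then β (k.val - i.val + 1)
     else 0)
  else 0


namespace SLbAux

noncomputable def E (n : ℕ) (i : Fin n) : Fin n → ℂ := Pi.single i 1

lemma mul_E (n : ℕ) (c : Fin n → Fin n → Fin n → ℂ) (x : Fin n → ℂ) (j k : Fin n) :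
    structMul n c x (E n j) k = ∑ i, x i * c i j k := by
  simp [structMul, E, Pi.single_apply]

lemma E_mul_E (n : ℕ) (c : Fin n → Fin n → Fin n → ℂ) (i j k : Fin n) :
    structMul n c (E n i) (E n j) k = c i j k := by
  rw [mul_E]; simp [E, Pi.single_apply]

lemma mul_E_ge (n : ℕ) (β : ℕ → ℂ) (γ : ℂ) (x : Fin n → ℂ) (j : Fin n) (hj : 2 ≤ j.val) :
    structMul n (cSLb n β γ) x (E n j) = 0 := by
  funext k
  rw [mul_E]
  apply Finset.sum_eq_zero
  intro i _
  have h0 : j.val ≠ 0 := by omega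
  have h1 : j.val ≠ 1 := by omega
  simp [cSLb, h0, h1]

/-- A vector whose first two coordinates vanish multiplies by zero on the right. -/
lemma mul_eq_zero_of (n : ℕ) (β : ℕ → ℂ) (γ : ℂ) (x y : Fin n → ℂ)
    (hy : ∀ j : Fin n, j.val < 2 → y j = 0) :
    structMul n (cSLb n β γ) x y = 0 := by
  have hsum : y = ∑ j, y j • E n j := by
    funext k
    simp [E, Finset.sum_apply, Pi.single_apply]
  rw [hsum, map_sum]
  apply Finset.sum_eq_zero
  intro j _
  rw [map_smul]
  by_cases h : j.val < 2
  · rw [hy j h, zero_smul]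
  · rw [mul_E_ge n β γ x j (by omega), smul_zero]

/-- Right multiplication by a basis vector. -/
noncomputable def R (n : ℕ) (β : ℕ → ℂ) (γ : ℂ) (j : Fin n) : Module.End ℂ (Fin n → ℂ) :=
  (structMul n (cSLb n β γ)).flip (E n j)

lemma R_apply (n : ℕ) (β : ℕ → ℂ) (γ : ℂ) (j : Fin n) (x : Fin n → ℂ) :
    R n β γ j x = structMul n (cSLb n β γ) x (E n j) := rfl

lemma A_two (n : ℕ) (hn : 5 ≤ n) (β : ℕ → ℂ) (γ : ℂ) (x : Fin n → ℂ) :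
    R n β γ ⟨0, by omega⟩ x ⟨2, by omega⟩ = x ⟨0, by omega⟩ := by
  rw [R_apply, mul_E, Finset.sum_eq_single ⟨0, by omega⟩]
  · simp [cSLb]
  · intro i _ hi
    have h0 : i.val ≠ 0 := fun h => hi (Fin.ext h)
    have h1 : ¬ (2 ≤ i.val ∧ i.val ≤ n - 2 ∧ 2 = i.val + 1) := by omega
    simp only [cSLb, if_true, if_neg h1, h0, false_and, if_false, mul_zero]
  · simp

lemma A_succ (n : ℕ) (β : ℕ → ℂ) (γ : ℂ) (x : Fin n → ℂ) (k : ℕ)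
    (hk : 2 ≤ k) (hkn : k + 1 < n) :
    R n β γ ⟨0, by omega⟩ x ⟨k + 1, hkn⟩ = x ⟨k, by omega⟩ := by
  rw [R_apply, mul_E, Finset.sum_eq_single ⟨k, by omega⟩]
  · have h0 : k ≠ 0 := by omega
    have h1 : k ≤ n - 2 := by omega
    simp [cSLb, h0, hk, h1]
  · intro i _ hi
    have h0 : i.val ≠ k := fun h => hi (Fin.ext h)
    have h1 : ¬ (2 ≤ i.val ∧ i.val ≤ n - 2 ∧ k + 1 = i.val + 1) := by omega
    have h2 : ¬ (i.val = 0 ∧ k + 1 = 2) := by omega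
    simp only [cSLb, if_true, if_neg h1, if_neg h2, mul_zero]
  · simp

lemma A_low (n : ℕ) (hn : 5 ≤ n) (β : ℕ → ℂ) (γ : ℂ) (x : Fin n → ℂ) (k : Fin n)
    (hk : k.val < 2) :
    R n β γ ⟨0, by omega⟩ x k = 0 := by
  rw [R_apply, mul_E]
  apply Finset.sum_eq_zero
  intro i _
  have h1 : ¬ (2 ≤ i.val ∧ i.val ≤ n - 2 ∧ k.val = i.val + 1) := by omega
  have h2 : ¬ (i.val = 0 ∧ k.val = 2) := by omega
  simp only [cSLb, if_true, if_neg h1, if_neg h2, mul_zero]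

lemma A_E_zero (n : ℕ) (hn : 5 ≤ n) (β : ℕ → ℂ) (γ : ℂ) :
    R n β γ ⟨0, by omega⟩ (E n ⟨0, by omega⟩) = E n ⟨2, by omega⟩ := by
  funext k
  rw [R_apply, E_mul_E]
  by_cases h : k.val = 2 <;> simp [cSLb, E, Pi.single_apply, Fin.ext_iff, h]

lemma A_E_one (n : ℕ) (hn : 5 ≤ n) (β : ℕ → ℂ) (γ : ℂ) :
    R n β γ ⟨0, by omega⟩ (E n ⟨1, by omega⟩) = 0 := by
  funext k
  rw [R_apply, E_mul_E]
  simp [cSLb]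

lemma A_E_succ (n : ℕ) (β : ℕ → ℂ) (γ : ℂ) (i : ℕ) (hi : 2 ≤ i) (hin : i + 1 < n) :
    R n β γ ⟨0, by omega⟩ (E n ⟨i, by omega⟩) = E n ⟨i + 1, hin⟩ := by
  funext k
  rw [R_apply, E_mul_E]
  have h0 : i ≠ 0 := by omega
  have h1 : i ≤ n - 2 := by omega
  by_cases h : k.val = i + 1 <;> simp [cSLb, E, Pi.single_apply, Fin.ext_iff, h, h0, hi, h1]

lemma R_E_last (n : ℕ) (hn : 5 ≤ n) (β : ℕ → ℂ) (γ : ℂ) (j : Fin n) :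
    R n β γ j (E n ⟨n - 1, by omega⟩) = 0 := by
  funext k
  rw [R_apply, E_mul_E]
  have h0 : ¬ (n - 1 = 0) := by omega
  have h1 : ¬ (n - 1 = 1) := by omega
  have h2 : ¬ (n - 1 ≤ n - 2) := by omega
  have h3 : ¬ (n - 1 ≤ n - 3) := by omega
  simp only [cSLb, h0, h1, h2, h3, false_and, and_false, if_false, ite_self, Pi.zero_apply]

lemma end_ext (n : ℕ) (f g : Module.End ℂ (Fin n → ℂ)) (h : ∀ i, f (E n i) = g (E n i)) :
    f = g := by
  apply LinearMap.pi_ext'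
  intro i
  ext1
  simpa [E] using h i

lemma B_E (n : ℕ) (hn : 5 ≤ n) (β : ℕ → ℂ) (γ : ℂ) (i k : Fin n) :
    R n β γ ⟨1, by omega⟩ (E n i) k = cSLb n β γ i ⟨1, by omega⟩ k := by
  rw [R_apply, E_mul_E]

lemma AB (n : ℕ) (hn : 5 ≤ n) (β : ℕ → ℂ) (γ : ℂ) :
    Commute (R n β γ ⟨0, by omega⟩) (R n β γ ⟨1, by omega⟩) := by
  apply end_ext
  intro i
  obtain ⟨i, hi⟩ := i
  funext k
  obtain ⟨k, hk⟩ := k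
  simp only [Module.End.mul_apply]
  -- left side
  have L : R n β γ ⟨0, by omega⟩ (R n β γ ⟨1, by omega⟩ (E n ⟨i, hi⟩)) ⟨k, hk⟩ =
      if h : 3 ≤ k then cSLb n β γ ⟨i, hi⟩ ⟨1, by omega⟩ ⟨k - 1, by omega⟩ else 0 := by
    split_ifs with h
    · obtain ⟨m, rfl⟩ : ∃ m, k = m + 1 := ⟨k - 1, by omega⟩
      rw [A_succ n β γ _ m (by omega) hk, B_E n hn]
      rfl
    · by_cases h2 : k = 2
      · subst h2
        rw [A_two n hn, B_E n hn]
        have h3 : ¬ (0 = n - 1) := by omega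
        simp [cSLb, h3]
      · exact A_low n hn _ _ _ _ (by simp only; omega)
  rw [L]
  rcases (by omega : i = 0 ∨ i = 1 ∨ (2 ≤ i ∧ i + 1 < n) ∨ i = n - 1) with h | h | h | h
  · subst h
    rw [A_E_zero n hn, B_E n hn]
    simp only [cSLb]
    grind
  · subst h
    rw [A_E_one n hn, map_zero]
    simp only [cSLb, Pi.zero_apply]
    grind
  · rw [A_E_succ n β γ i h.1 h.2, B_E n hn]
    simp only [cSLb]
    grind
  · subst h
    rw [R_E_last n hn, map_zero]
    simp only [cSLb, Pi.zero_apply]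
    grind

lemma R_ge (n : ℕ) (β : ℕ → ℂ) (γ : ℂ) (j : Fin n) (hj : 2 ≤ j.val) : R n β γ j = 0 := by
  exact LinearMap.ext fun x => mul_E_ge n β γ x j hj

lemma AR (n : ℕ) (hn : 5 ≤ n) (β : ℕ → ℂ) (γ : ℂ) (j : Fin n) :
    Commute (R n β γ ⟨0, by omega⟩) (R n β γ j) := by
  obtain ⟨j, hj⟩ := j
  rcases (by omega : j = 0 ∨ j = 1 ∨ 2 ≤ j) with h | h | h
  · subst h; exact Commute.refl _
  · subst h; exact AB n hn β γ
  · rw [R_ge n β γ ⟨j, hj⟩ h]; exact Commute.zero_right _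

/-- An operator commuting with right multiplications, with values killed as right factors,
is a derivation. -/
lemma mem_der_of (n : ℕ) (β : ℕ → ℂ) (γ : ℂ) (d : Module.End ℂ (Fin n → ℂ))
    (hc : ∀ j, Commute d (R n β γ j)) (hz : ∀ y (j : Fin n), j.val < 2 → d y j = 0) :
    d ∈ derivations n (structMul n (cSLb n β γ)) := by
  intro x y
  rw [mul_eq_zero_of n β γ x (d y) (hz y), add_zero]
  have hsum : y = ∑ j, y j • E n j := by
    funext k
    simp [E, Finset.sum_apply, Pi.single_apply]
  rw [hsum]
  simp only [map_sum, map_smul]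
  refine Finset.sum_congr rfl fun j _ => ?_
  congr 1
  exact congrArg (fun f : Module.End ℂ (Fin n → ℂ) => f x) (hc j)

lemma A_pow_mem (n : ℕ) (hn : 5 ≤ n) (β : ℕ → ℂ) (γ : ℂ) (k : ℕ) :
    (R n β γ ⟨0, by omega⟩) ^ (k + 1) ∈ derivations n (structMul n (cSLb n β γ)) := by
  apply mem_der_of
  · intro j; exact (AR n hn β γ j).pow_left _
  · intro y j hj
    rw [pow_succ', Module.End.mul_apply]
    exact A_low n hn _ _ _ _ hj

noncomputable def F (n : ℕ) (hn : 5 ≤ n) : Module.End ℂ (Fin n → ℂ) :=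
  (LinearMap.proj (⟨1, by omega⟩ : Fin n)).smulRight (E n ⟨n - 1, by omega⟩)

lemma F_apply (n : ℕ) (hn : 5 ≤ n) (x : Fin n → ℂ) :
    F n hn x = x ⟨1, by omega⟩ • E n ⟨n - 1, by omega⟩ := rfl

lemma R_one_coord (n : ℕ) (hn : 5 ≤ n) (β : ℕ → ℂ) (γ : ℂ) (j : Fin n) (x : Fin n → ℂ) :
    R n β γ j x ⟨1, by omega⟩ = 0 := by
  rw [R_apply, mul_E]
  apply Finset.sum_eq_zero
  intro i _
  simp only [cSLb]
  grind

lemma F_mem (n : ℕ) (hn : 5 ≤ n) (β : ℕ → ℂ) (γ : ℂ) :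
    F n hn ∈ derivations n (structMul n (cSLb n β γ)) := by
  apply mem_der_of
  · intro j
    refine LinearMap.ext fun x => ?_
    simp only [Module.End.mul_apply, F_apply, map_smul, R_E_last n hn, smul_zero,
      R_one_coord n hn, zero_smul]
  · intro y j hj
    have : j ≠ ⟨n - 1, by omega⟩ := by
      intro h; rw [h] at hj; simp only at hj; omega
    simp [F_apply, E, Pi.single_apply, this]

lemma A_pow_E_zero (n : ℕ) (hn : 5 ≤ n) (β : ℕ → ℂ) (γ : ℂ) (k : ℕ) (hk : k + 2 < n) :
    ((R n β γ ⟨0, by omega⟩) ^ (k + 1)) (E n ⟨0, by omega⟩) = E n ⟨k + 2, hk⟩ := by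
  induction k with
  | zero => rw [zero_add, pow_one]; exact A_E_zero n hn β γ
  | succ k ih =>
    rw [pow_succ', Module.End.mul_apply, ih (by omega)]
    exact A_E_succ n β γ (k + 2) (by omega) hk

lemma A_pow_E_one (n : ℕ) (hn : 5 ≤ n) (β : ℕ → ℂ) (γ : ℂ) (k : ℕ) :
    ((R n β γ ⟨0, by omega⟩) ^ (k + 1)) (E n ⟨1, by omega⟩) = 0 := by
  rw [pow_succ, Module.End.mul_apply, A_E_one n hn, map_zero]

lemma lower (n : ℕ) (hn : 5 ≤ n) (β : ℕ → ℂ) (γ : ℂ) :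
    n - 1 ≤ Module.finrank ℂ (derivations n (structMul n (cSLb n β γ))) := by
  let v : Option (Fin (n - 2)) → Module.End ℂ (Fin n → ℂ) := fun o =>
    match o with
    | none => F n hn
    | some k => (R n β γ ⟨0, by omega⟩) ^ (k.val + 1)
  have hv : LinearIndependent ℂ v := by
    refine Fintype.linearIndependent_iff.2 ?_
    intro g hg'
    rw [Fintype.sum_option] at hg'
    simp only [v] at hg'
    intro o
    cases o with
    | none =>
      have h1 := congrFun (congrArg (fun f : Module.End ℂ (Fin n → ℂ) =>
        f (E n ⟨1, by omega⟩)) hg') ⟨n - 1, by omega⟩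
      simp only [LinearMap.add_apply, LinearMap.sum_apply, LinearMap.smul_apply,
        A_pow_E_one n hn, F_apply] at h1
      simpa [E] using h1
    | some m =>
      have h1 := congrFun (congrArg (fun f : Module.End ℂ (Fin n → ℂ) =>
        f (E n ⟨0, by omega⟩)) hg') ⟨m.val + 2, by omega⟩
      have h2 : ∀ k : Fin (n - 2), ((R n β γ ⟨0, by omega⟩) ^ (k.val + 1))
          (E n ⟨0, by omega⟩) = E n ⟨k.val + 2, by omega⟩ :=
        fun k => A_pow_E_zero n hn β γ k.val (by omega)
      simp only [LinearMap.add_apply, LinearMap.sum_apply, LinearMap.smul_apply, h2, F_apply] at h1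
      simpa [E, Pi.single_apply, Finset.sum_apply, Fin.ext_iff, ← Fin.ext_iff] using h1
  have hle : Submodule.span ℂ (Set.range v) ≤ derivations n (structMul n (cSLb n β γ)) := by
    rw [Submodule.span_le]
    rintro _ ⟨o, rfl⟩
    cases o with
    | none => exact F_mem n hn β γ
    | some k => exact A_pow_mem n hn β γ k.val
  have := Submodule.finrank_mono hle
  rw [finrank_span_eq_card hv] at this
  simp only [Fintype.card_option, Fintype.card_fin] at this
  omega

lemma upper (n : ℕ) (hn : 5 ≤ n) (β : ℕ → ℂ) (γ : ℂ) :
    Module.finrank ℂ (derivations n (structMul n (cSLb n β γ))) ≤ n + 2 := by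
  let ev (i : Fin n) : Module.End ℂ (Fin n → ℂ) →ₗ[ℂ] (Fin n → ℂ) := LinearMap.applyₗ (E n i)
  let Ψ : Module.End ℂ (Fin n → ℂ) →ₗ[ℂ] (Fin n → ℂ) × (ℂ × ℂ) :=
    (ev ⟨0, by omega⟩).prod
      (((LinearMap.proj (⟨1, by omega⟩ : Fin n)).comp (ev ⟨1, by omega⟩)).prod
        ((LinearMap.proj (⟨n - 1, by omega⟩ : Fin n)).comp (ev ⟨1, by omega⟩)))
  let Φ := Ψ.comp (Submodule.subtype (derivations n (structMul n (cSLb n β γ))))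
  have hΦ : Function.Injective Φ := by
    rw [injective_iff_map_eq_zero]
    rintro ⟨d, hd⟩ h
    have h0 : d (E n ⟨0, by omega⟩) = 0 := congrArg Prod.fst h
    have h1 : d (E n ⟨1, by omega⟩) ⟨1, by omega⟩ = 0 := congrArg (fun p => p.2.1) h
    have h2 : d (E n ⟨1, by omega⟩) ⟨n - 1, by omega⟩ = 0 := congrArg (fun p => p.2.2) h
    have hA : ∀ x, d (R n β γ ⟨0, by omega⟩ x) = R n β γ ⟨0, by omega⟩ (d x) := by
      intro x
      have := hd x (E n ⟨0, by omega⟩)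
      rw [h0, map_zero, add_zero] at this
      exact this
    have hs : ∀ k (hk : k + 2 < n), d (E n ⟨k + 2, hk⟩) = 0 := by
      intro k
      induction k with
      | zero =>
        intro hk
        have := hA (E n ⟨0, by omega⟩)
        rw [A_E_zero n hn, h0, map_zero] at this
        exact this
      | succ k ih =>
        intro hk
        have := hA (E n ⟨k + 2, by omega⟩)
        rw [A_E_succ n β γ (k + 2) (by omega) hk, ih, map_zero] at this
        exact this
    have he1 : d (E n ⟨1, by omega⟩) = 0 := by
      have h3 := hA (E n ⟨1, by omega⟩)
      rw [A_E_one n hn, map_zero] at h3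
      funext k
      obtain ⟨k, hk⟩ := k
      rcases (by omega : k = 0 ∨ k = 1 ∨ (2 ≤ k ∧ k + 1 < n) ∨ k = n - 1) with h | h | h | h
      · subst h
        exact (A_two n hn β γ _).symm.trans (congrFun h3.symm _)
      · subst h; exact h1
      · exact (A_succ n β γ _ k h.1 h.2).symm.trans (congrFun h3.symm _)
      · subst h; exact h2
    apply Subtype.ext
    apply end_ext
    rintro ⟨i, hi⟩
    rcases (by omega : i = 0 ∨ i = 1 ∨ 2 ≤ i) with h | h | h
    · subst h; exact h0
    · subst h; exact he1
    · obtain ⟨k, rfl⟩ : ∃ k, i = k + 2 := ⟨i - 2, by omega⟩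
      exact hs k hi
  have := LinearMap.finrank_le_finrank_of_injective hΦ
  simpa using this

end SLbAux

theorem dim_der_SLb_bounds (n : ℕ) (hn : 5 ≤ n) (β : ℕ → ℂ) (γ : ℂ) :
    n - 1 ≤ Module.finrank ℂ (derivations n (structMul n (cSLb n β γ))) ∧
      Module.finrank ℂ (derivations n (structMul n (cSLb n β γ))) ≤ n + 2 := by
  exact ⟨SLbAux.lower n hn β γ, SLbAux.upper n hn β γ⟩
end
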